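/- Assume G ∈ C²(Ω × Y × ℝ) satisfies (Reg), (Mono), (Twist), (Gen_Ω) and (Gen_∂X), that X ⊆ Ω is compact, that ρ is a continuous probability density supported in X, and that int(X) ∩ {ρ > 0} is path-connected. Let ν ∈ ℝ^N with Σᵢ νᵢ = 1, and let ψ ∈ ℝ^N satisfy Hᵢ(ψ) > 0 for every i. Then the system { DH(ψ)u = H(ψ) − ν , u₁ = 0 } has a unique solution u ∈ ℝ^N. -/

import Mathlib

set_option autoImplicit false

open MeasureTheory Set

noncomputable section

variable {d N : ℕ}

/-- Generalized Laguerre cell associated to `ψ` and index `i`. -/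
def Lag (Ω : Set (EuclideanSpace ℝ (Fin d))) (G : EuclideanSpace ℝ (Fin d) → Fin N → ℝ → ℝ)
    (ψ : Fin N → ℝ) (i : Fin N) : Set (EuclideanSpace ℝ (Fin d)) :=
  {x ∈ Ω | ∀ j, G x j (ψ j) ≤ G x i (ψ i)}

/-- Interface `Γᵢⱼ(ψ)` between two cells. -/
def Gam (Ω : Set (EuclideanSpace ℝ (Fin d))) (G : EuclideanSpace ℝ (Fin d) → Fin N → ℝ → ℝ)
    (ψ : Fin N → ℝ) (i j : Fin N) : Set (EuclideanSpace ℝ (Fin d)) :=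
  {x ∈ Ω | G x i (ψ i) = G x j (ψ j)}

/-- The mass function `H(ψ) = (μ(Lagᵢ(ψ)))ᵢ` where `μ` has density `ρ`. -/
def Hfun (Ω : Set (EuclideanSpace ℝ (Fin d))) (G : EuclideanSpace ℝ (Fin d) → Fin N → ℝ → ℝ)
    (ρ : EuclideanSpace ℝ (Fin d) → ℝ) (ψ : Fin N → ℝ) : Fin N → ℝ :=
  fun i => ((volume.withDensity fun x => ENNReal.ofReal (ρ x)) (Lag Ω G ψ i)).toReal

/-!
`DH(ψ)` is the generator of an irreducible Markov chain on the targets, and such an operator is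
injective on `{u | uₖ = 0}` (maximum principle) with range `{w | ∑ wᵢ = 0}` (dimension count).

*Differentiability.* Locally choose a direction `e` transverse to all the interfaces, which exists
by (Twist), and write the mass of a cell as an average of its masses along the lines `x + ℝ e`. The
triple points form an `ℋ^{d-1}`-null set, so almost every such line misses them; along such a line
the cell has endpoints depending differentiably on `ψ` by the implicit function theorem. The masses
along lines are Lipschitz in `ψ` uniformly in `x`, so one may differentiate under the integral.

*Generator.* Columns sum to zero because the total mass `∑ Hᵢ` is conserved, and off-diagonal
entries are nonnegative by (Mono).

*Irreducibility.* Removing an `ℋ^{d-1}`-null set from the connected open set `{ρ > 0}` leaves it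
connected, so for any partition of the targets into two classes some point with `ρ > 0` lies in
exactly two cells `i` and `j`, of different classes. Near that point, raising `ψⱼ` by `t`
transfers mass of order `t` to cell `i`, so the corresponding entry of `DH(ψ)` is positive.
-/

open Filter Topology

open scoped ENNReal NNReal

section Cell

variable {α P ι : Type*}

/-- The region of `Ω` cut out by the inequalities `0 ≤ f l (ψ, ·)`, where `ψ` is a parameter. -/
def cell (Ω : Set α) (f : ι → P × α → ℝ) (ψ : P) : Set α := {x ∈ Ω | ∀ l, 0 ≤ f l (ψ, x)}

lemma eventually_mem_cell_iff_of_forall_ne_pos [TopologicalSpace α] [TopologicalSpace P] [Finite ι]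
    {Ω : Set α} (hΩ : IsOpen Ω) {f : ι → P × α → ℝ} {ψ₀ : P} {x : α} (hx : x ∈ Ω) (l : ι)
    (hf : ∀ m, ContinuousAt (f m) (ψ₀, x)) (hpos : ∀ m, m ≠ l → 0 < f m (ψ₀, x)) :
    ∀ᶠ p in 𝓝 (ψ₀, x), p.2 ∈ cell Ω f p.1 ↔ 0 ≤ f l p := by
  have hne_pos : ∀ᶠ p in 𝓝 (ψ₀, x), ∀ m, m ≠ l → 0 < f m p :=
    eventually_all.2 fun m => by
      by_cases hml : m = l
      · simp [hml]
      · exact ((hf m).eventually (lt_mem_nhds (hpos m hml))).mono fun _ h _ => h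
  filter_upwards [hne_pos, continuousAt_snd.eventually (hΩ.mem_nhds hx)] with p hp hpΩ
  refine ⟨fun h => h.2 l, fun hl => ⟨hpΩ, fun m => ?_⟩⟩
  rcases eq_or_ne m l with rfl | hml
  exacts [hl, (hp m hml).le]

end Cell

section Localization

variable {α P ι : Type*} [TopologicalSpace α] [MeasurableSpace α] {μ : Measure α}

lemma setIntegral_congr_on_tsupport [OpensMeasurableSpace α] {A B : Set α} {g : α → ℝ}
    (h : ∀ x ∈ tsupport g, x ∈ A ↔ x ∈ B) : ∫ x in A, g x ∂μ = ∫ x in B, g x ∂μ := by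
  have restrict_tsupport (C : Set α) : ∫ x in C, g x ∂μ = ∫ x in tsupport g ∩ C, g x ∂μ := by
    rw [← Measure.restrict_restrict (isClosed_tsupport g).measurableSet,
      setIntegral_eq_integral_of_forall_compl_eq_zero fun x =>
        image_eq_zero_of_notMem_tsupport (f := g)]
  rw [restrict_tsupport A, restrict_tsupport B]
  congr 2
  ext x
  exact and_congr_right (h x)

variable [NormedAddCommGroup P] [NormedSpace ℝ P]

/-- The mass `∫ x in A ψ, g x ∂μ` of a moving region `A ψ` is differentiable in the parameter at
`ψ₀` for all continuous densities `g` supported near `x`: the local form of differentiability of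
the mass, which partitions of unity turn into the global one. -/
def MassDifferentiableNear (μ : Measure α) (A : P → Set α) (ψ₀ : P) (x : α) : Prop :=
  ∃ V ∈ 𝓝 x, ∀ g : α → ℝ, Continuous g → HasCompactSupport g → tsupport g ⊆ V →
    DifferentiableAt ℝ (fun ψ => ∫ x in A ψ, g x ∂μ) ψ₀

namespace MassDifferentiableNear

variable {A B : P → Set α} {ψ₀ : P} {x : α}

lemma const (B : Set α) : MassDifferentiableNear μ (fun _ : P => B) ψ₀ x :=
  ⟨univ, univ_mem, fun _ _ _ _ => differentiableAt_const _⟩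

lemma congr [OpensMeasurableSpace α] (hB : MassDifferentiableNear μ B ψ₀ x)
    (hAB : ∀ᶠ p in 𝓝 (ψ₀, x), p.2 ∈ A p.1 ↔ p.2 ∈ B p.1) :
    MassDifferentiableNear μ A ψ₀ x := by
  obtain ⟨V, hV, hdiff⟩ := hB
  obtain ⟨W, hW, V', hV', hWV'⟩ := mem_nhds_prod_iff.1 hAB
  refine ⟨V ∩ V', inter_mem hV hV', fun g hg hgc hgV => ?_⟩
  refine (hdiff g hg hgc (hgV.trans inter_subset_left)).congr_of_eventuallyEq ?_
  filter_upwards [hW] with ψ hψ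
  exact setIntegral_congr_on_tsupport fun x hx => hWV' (mk_mem_prod hψ (hgV hx).2)

lemma differentiableAt_setIntegral [T2Space α] [LocallyCompactSpace α] [OpensMeasurableSpace α]
    [IsFiniteMeasureOnCompacts μ] {g : α → ℝ} (hg : Continuous g) (hgc : HasCompactSupport g)
    (h : ∀ x ∈ tsupport g, MassDifferentiableNear μ A ψ₀ x) :
    DifferentiableAt ℝ (fun ψ => ∫ x in A ψ, g x ∂μ) ψ₀ := by
  choose! V hV hdiff using h
  obtain ⟨t, ht, hcover⟩ := hgc.elim_nhds_subcover (fun x => interior (V x))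
    fun x hx => interior_mem_nhds.2 (hV x hx)
  obtain ⟨χ, hχV, hχ_sum, -, hχc⟩ := exists_continuous_sum_one_of_isOpen_isCompact
    (s := fun k => interior (V (t.equivFin.symm k))) (fun _ => isOpen_interior) hgc (by
      intro x hx
      obtain ⟨z, hz, hxz⟩ := mem_iUnion₂.1 (hcover hx)
      exact mem_iUnion.2 ⟨t.equivFin ⟨z, hz⟩, by simpa using hxz⟩)
  have hg_sum (x : α) : g x = ∑ k, χ k x * g x := by
    by_cases hx : x ∈ tsupport g
    · have hone := hχ_sum hx
      simp only [Finset.sum_apply, Pi.one_apply] at hone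
      rw [← Finset.sum_mul, hone, one_mul]
    · simp [image_eq_zero_of_notMem_tsupport hx]
  have hcont k : Continuous fun x => χ k x * g x := (χ k).continuous.mul hg
  have hcomp k : HasCompactSupport fun x => χ k x * g x := (hχc k).mul_right
  have hsplit : (fun ψ => ∫ x in A ψ, g x ∂μ) = fun ψ => ∑ k, ∫ x in A ψ, χ k x * g x ∂μ := by
    ext ψ
    rw [← integral_finsetSum _ fun k _ =>
      ((hcont k).integrable_of_hasCompactSupport (hcomp k)).integrableOn]
    exact integral_congr_ae (Eventually.of_forall hg_sum)
  rw [hsplit]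
  refine DifferentiableAt.fun_sum fun k _ =>
    hdiff _ (ht _ (t.equivFin.symm k).2) _ (hcont k) (hcomp k) ?_
  exact (tsupport_mul_subset_left.trans (hχV k)).trans interior_subset

end MassDifferentiableNear

variable {Ω : Set α} {f : ι → P × α → ℝ} {ψ₀ : P} {x : α}

lemma massDifferentiableNear_cell_of_neg [OpensMeasurableSpace α] {l : ι}
    (hf : ContinuousAt (f l) (ψ₀, x)) (hl : f l (ψ₀, x) < 0) :
    MassDifferentiableNear μ (cell Ω f) ψ₀ x := by
  refine (MassDifferentiableNear.const ∅).congr ?_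
  filter_upwards [hf.eventually (gt_mem_nhds hl)] with p hp
  exact iff_of_false (fun h => (h.2 l).not_gt hp) (notMem_empty _)

lemma massDifferentiableNear_cell_of_forall_pos [OpensMeasurableSpace α] [Finite ι]
    (hΩ : IsOpen Ω) (hx : x ∈ Ω) (hf : ∀ l, ContinuousAt (f l) (ψ₀, x))
    (hpos : ∀ l, 0 < f l (ψ₀, x)) : MassDifferentiableNear μ (cell Ω f) ψ₀ x := by
  refine (MassDifferentiableNear.const univ).congr ?_
  filter_upwards [eventually_all.2 fun l => (hf l).eventually (lt_mem_nhds (hpos l)),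
    continuousAt_snd.eventually (hΩ.mem_nhds hx)] with p hp hpΩ
  exact iff_of_true ⟨hpΩ, fun l => (hp l).le⟩ (mem_univ _)

end Localization

section StrictDerivative

variable {Q : Type*} [NormedAddCommGroup Q] [NormedSpace ℝ Q] {f : Q → ℝ} {f' : Q →L[ℝ] ℝ} {q₀ : Q}

lemma exists_nhds_abs_sub_sub_le (hf : HasStrictFDerivAt f f' q₀) (v : Q) {ε : ℝ} (hε : 0 < ε) :
    ∃ U ∈ 𝓝 q₀, ∀ q ∈ U, ∀ s : ℝ, q + s • v ∈ U →
      |f (q + s • v) - f q - s * f' v| ≤ ε * |s| := by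
  have hlittle := hf.isLittleO.def (c := ε / (‖v‖ + 1)) (by positivity)
  rw [nhds_prod_eq, eventually_prod_self_iff'] at hlittle
  obtain ⟨U, hU, hbound⟩ := hlittle
  refine ⟨U, hU, fun q hq s hqs => ?_⟩
  have hqs_bound := hbound _ hqs q hq
  simp only [add_sub_cancel_left, map_smul, smul_eq_mul, Real.norm_eq_abs, norm_smul]
    at hqs_bound
  calc |f (q + s • v) - f q - s * f' v| ≤ ε / (‖v‖ + 1) * (|s| * ‖v‖) := hqs_bound
    _ = ε * |s| * (‖v‖ / (‖v‖ + 1)) := by ring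
    _ ≤ ε * |s| := mul_le_of_le_one_right (by positivity)
      (div_le_one_of_le₀ (le_add_of_nonneg_right zero_le_one) (by positivity))

lemma exists_nhds_nonneg_sub_iff (hf : HasStrictFDerivAt f f' q₀) {v : Q} (hv : f' v ≠ 0) :
    ∃ U ∈ 𝓝 q₀, ∀ q ∈ U, ∀ s : ℝ, q + s • v ∈ U →
      (0 ≤ f (q + s • v) - f q ↔ 0 ≤ s * f' v) := by
  obtain ⟨U, hU, hbound⟩ := exists_nhds_abs_sub_sub_le hf v (half_pos (abs_pos.2 hv))
  refine ⟨U, hU, fun q hq s hqs => ?_⟩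
  have hclose := hbound q hq s hqs
  rw [div_mul_eq_mul_div, mul_comm |f' v|, ← abs_mul, abs_le] at hclose
  rcases le_total 0 (s * f' v) with hs | hs
  · rw [abs_of_nonneg hs] at hclose
    exact iff_of_true (by linarith) hs
  · rw [abs_of_nonpos hs] at hclose
    exact ⟨fun h => by linarith, fun h => by linarith⟩

lemma exists_nhds_mul_abs_le_abs_sub (hf : HasStrictFDerivAt f f' q₀) {v : Q} (hv : f' v ≠ 0) :
    ∃ U ∈ 𝓝 q₀, ∀ q ∈ U, ∀ s : ℝ, q + s • v ∈ U →
      |f' v| / 2 * |s| ≤ |f (q + s • v) - f q| := by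
  obtain ⟨U, hU, hbound⟩ := exists_nhds_abs_sub_sub_le hf v (half_pos (abs_pos.2 hv))
  refine ⟨U, hU, fun q hq s hqs => ?_⟩
  have hclose := hbound q hq s hqs
  have htriangle := abs_sub_abs_le_abs_sub (s * f' v) (f (q + s • v) - f q)
  rw [abs_sub_comm (s * f' v), abs_mul] at htriangle
  linarith

end StrictDerivative

section RealLine

variable {P ι : Type*} [NormedAddCommGroup P] [NormedSpace ℝ P] {ψ₀ : P} {s₀ : ℝ}

lemma exists_differentiableAt_nonneg_iff [CompleteSpace P] {F : P × ℝ → ℝ} {F' : P × ℝ →L[ℝ] ℝ}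
    (hF : HasStrictFDerivAt F F' (ψ₀, s₀)) (hzero : F (ψ₀, s₀) = 0) (hslope : F' (0, 1) ≠ 0) :
    ∃ σ : P → ℝ, DifferentiableAt ℝ σ ψ₀ ∧
      ∀ᶠ p in 𝓝 (ψ₀, s₀), 0 ≤ F p ↔ 0 ≤ (p.2 - σ p.1) * F' (0, 1) := by
  have hinv : (F' ∘L .inr ℝ P ℝ).IsInvertible :=
    ⟨ContinuousLinearEquiv.unitsEquivAut ℝ (Units.mk0 (F' (0, 1)) hslope), by ext; simp⟩
  refine ⟨hF.implicitFunctionOfProdDomain hinv,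
    (hF.hasStrictFDerivAt_implicitFunctionOfProdDomain hinv).differentiableAt, ?_⟩
  have hroot := hF.eventually_apply_implicitFunctionOfProdDomain hinv
  have htendsto := hF.tendsto_implicitFunctionOfProdDomain hinv
  set σ := hF.implicitFunctionOfProdDomain hinv
  obtain ⟨U, hU, hsign⟩ := exists_nhds_nonneg_sub_iff hF hslope
  have hσU : ∀ᶠ ψ in 𝓝 ψ₀, (ψ, σ ψ) ∈ U := (tendsto_id.prodMk_nhds htendsto).eventually hU
  filter_upwards [hU, continuousAt_fst.eventually hσU, continuousAt_fst.eventually hroot]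
    with p hp hσp hroot_p
  have hline : (p.1, σ p.1) + (p.2 - σ p.1) • ((0 : P), (1 : ℝ)) = p := by ext <;> simp
  have := hsign _ hσp (p.2 - σ p.1) (by rwa [hline])
  rwa [hline, hroot_p, hzero, sub_zero] at this

lemma differentiableAt_setIntegral_halfLine {g : ℝ → ℝ} (hg : Continuous g) (hgi : Integrable g)
    {σ : P → ℝ} (hσ : DifferentiableAt ℝ σ ψ₀) {a : ℝ} (ha : a ≠ 0) :
    DifferentiableAt ℝ (fun ψ => ∫ s in {s | 0 ≤ (s - σ ψ) * a}, g s) ψ₀ := by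
  have hIic : DifferentiableAt ℝ (fun ψ => ∫ s in Iic (σ ψ), g s) ψ₀ := by
    have hsplit : (fun t => ∫ s in Iic t, g s) =
        fun t => (∫ s in Iic 0, g s) + ∫ s in (0 : ℝ)..t, g s := by
      ext t
      rw [← intervalIntegral.integral_Iic_sub_Iic hgi.integrableOn hgi.integrableOn]
      ring
    have hFTC : DifferentiableAt ℝ (fun t => ∫ s in Iic t, g s) (σ ψ₀) := by
      rw [hsplit]
      exact (differentiableAt_const _).add
        (hg.integral_hasStrictDerivAt 0 (σ ψ₀)).hasDerivAt.differentiableAt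
    exact hFTC.comp ψ₀ hσ
  rcases ha.lt_or_gt with ha | ha
  · convert hIic using 4 with ψ
    ext s
    rw [mem_ofPred_eq, ← neg_mul_neg, mul_nonneg_iff_of_pos_right (neg_pos.2 ha),
      neg_nonneg, sub_nonpos, mem_Iic]
  · have hIci : (fun ψ => ∫ s in {s | 0 ≤ (s - σ ψ) * a}, g s) =
        fun ψ => (∫ s, g s) - ∫ s in Iic (σ ψ), g s := by
      ext ψ
      have hset : {s | 0 ≤ (s - σ ψ) * a} = Ici (σ ψ) := by
        ext s
        rw [mem_ofPred_eq, mul_nonneg_iff_of_pos_right ha, sub_nonneg, mem_Ici]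
      rw [hset, integral_Ici_eq_integral_Ioi,
        ← intervalIntegral.integral_Iic_add_Ioi hgi.integrableOn hgi.integrableOn (b := σ ψ)]
      ring
    rw [hIci]
    exact (differentiableAt_const _).sub hIic

lemma massDifferentiableNear_setOf_nonneg [CompleteSpace P] {F : P × ℝ → ℝ}
    {F' : P × ℝ →L[ℝ] ℝ} (hF : HasStrictFDerivAt F F' (ψ₀, s₀)) (hzero : F (ψ₀, s₀) = 0)
    (hslope : F' (0, 1) ≠ 0) :
    MassDifferentiableNear volume (fun ψ => {s | 0 ≤ F (ψ, s)}) ψ₀ s₀ := by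
  obtain ⟨σ, hσ, hiff⟩ := exists_differentiableAt_nonneg_iff hF hzero hslope
  have hhalf : MassDifferentiableNear volume (fun ψ => {s | 0 ≤ (s - σ ψ) * F' (0, 1)}) ψ₀ s₀ :=
    ⟨univ, univ_mem, fun g hg hgc _ => differentiableAt_setIntegral_halfLine hg
      (hg.integrable_of_hasCompactSupport hgc) hσ hslope⟩
  exact hhalf.congr hiff

lemma massDifferentiableNear_cell_real [CompleteSpace P] [Finite ι] {Ω : Set ℝ} (hΩ : IsOpen Ω)
    (hs₀ : s₀ ∈ Ω) {f : ι → P × ℝ → ℝ} {f' : ι → P × ℝ →L[ℝ] ℝ}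
    (hf : ∀ l, HasStrictFDerivAt (f l) (f' l) (ψ₀, s₀))
    (hslope : ∀ l, f l (ψ₀, s₀) = 0 → f' l (0, 1) ≠ 0)
    (hunique : ∀ l m, f l (ψ₀, s₀) = 0 → f m (ψ₀, s₀) = 0 → l = m) :
    MassDifferentiableNear volume (cell Ω f) ψ₀ s₀ := by
  have hcont l : ContinuousAt (f l) (ψ₀, s₀) := (hf l).continuousAt
  by_cases hneg : ∃ l, f l (ψ₀, s₀) < 0
  · obtain ⟨l, hl⟩ := hneg
    exact massDifferentiableNear_cell_of_neg (hcont l) hl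
  push Not at hneg
  by_cases hzero : ∃ l, f l (ψ₀, s₀) = 0
  · obtain ⟨l, hl⟩ := hzero
    exact (massDifferentiableNear_setOf_nonneg (hf l) hl (hslope l hl)).congr
      (eventually_mem_cell_iff_of_forall_ne_pos hΩ hs₀ l hcont fun m hml =>
        (hneg m).lt_of_ne fun hm => hml (hunique m l hm.symm hl))
  · push Not at hzero
    exact massDifferentiableNear_cell_of_forall_pos hΩ hs₀ hcont fun l =>
      (hneg l).lt_of_ne (hzero l).symm

end RealLine

section LineAverage

variable {E : Type*} [NormedAddCommGroup E] [NormedSpace ℝ E]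

/-- The average of `F` along the line through `x` in direction `e`, weighted by `κ`. Averaging
trades the integral of `F` over the whole space for integrals over lines. -/
def lineAverage (κ : ℝ → ℝ) (e : E) (F : E → ℝ) (x : E) : ℝ := ∫ s, κ s * F (x + s • e)

lemma support_lineAverage_subset (κ : ℝ → ℝ) (e : E) (F : E → ℝ) :
    Function.support (lineAverage κ e F) ⊆
      (fun p : ℝ × E => p.2 - p.1 • e) '' tsupport κ ×ˢ tsupport F := by
  intro x hx
  by_contra hxK
  refine hx (integral_eq_zero_of_ae (Eventually.of_forall fun s => ?_))
  by_contra hs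
  obtain ⟨hκs, hFs⟩ := mul_ne_zero_iff.1 hs
  exact hxK ⟨(s, x + s • e), ⟨subset_tsupport κ hκs, subset_tsupport F hFs⟩, by simp⟩

variable [MeasurableSpace E] [BorelSpace E]

lemma lineAverage_indicator (κ : ℝ → ℝ) (e : E) {A : Set E} (hA : MeasurableSet A) (g : E → ℝ)
    (x : E) : lineAverage κ e (A.indicator g) x =
      ∫ s in {s : ℝ | x + s • e ∈ A}, κ s * g (x + s • e) := by
  have hm : MeasurableSet {s : ℝ | x + s • e ∈ A} :=
    (show Measurable fun s : ℝ => x + s • e by fun_prop) hA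
  rw [lineAverage, ← integral_indicator hm]
  congr with s
  by_cases hs : x + s • e ∈ A <;> simp [indicator, hs]

lemma integrable_mul_indicator_add_smul {κ : ℝ → ℝ} (hκ : Continuous κ)
    (hκc : HasCompactSupport κ) {g : E → ℝ} (hg : Continuous g) {A : Set E}
    (hA : MeasurableSet A) (e x : E) :
    Integrable fun s => κ s * A.indicator g (x + s • e) := by
  have hline : Continuous fun s : ℝ => x + s • e := by fun_prop
  refine (((hκ.mul (hg.comp hline)).integrable_of_hasCompactSupport hκc.mul_right).indicator
    (hline.measurable hA)).congr (Eventually.of_forall fun s => ?_)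
  by_cases hs : x + s • e ∈ A <;> simp [indicator, hs]

lemma dist_lineAverage_indicator_le {κ : ℝ → ℝ} (hκ : Continuous κ) (hκc : HasCompactSupport κ)
    {g : E → ℝ} (hg : Continuous g) {m M D : ℝ} (hm : ∀ s, ‖κ s‖ ≤ m) (hM : ∀ x, ‖g x‖ ≤ M)
    {A B : Set E} (hA : MeasurableSet A) (hB : MeasurableSet B) (e x : E) (hD : 0 ≤ D)
    (hvol : volume {s : ℝ | g (x + s • e) ≠ 0 ∧ ¬(x + s • e ∈ A ↔ x + s • e ∈ B)} ≤
      ENNReal.ofReal D) :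
    dist (lineAverage κ e (A.indicator g) x) (lineAverage κ e (B.indicator g) x) ≤
      m * M * D := by
  have hm0 : 0 ≤ m := (norm_nonneg _).trans (hm 0)
  have hM0 : 0 ≤ M := (norm_nonneg _).trans (hM 0)
  rw [dist_eq_norm, lineAverage, lineAverage, ← integral_sub
      (integrable_mul_indicator_add_smul hκ hκc hg hA e x)
      (integrable_mul_indicator_add_smul hκ hκc hg hB e x),
    ← setIntegral_eq_integral_of_forall_compl_eq_zero
      (s := {s : ℝ | g (x + s • e) ≠ 0 ∧ ¬(x + s • e ∈ A ↔ x + s • e ∈ B)})]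
  · refine (norm_setIntegral_le_of_norm_le_const (C := m * M)
      (hvol.trans_lt ENNReal.ofReal_lt_top) fun s _ => ?_).trans ?_
    · rw [← mul_sub, norm_mul]
      refine mul_le_mul (hm s) ?_ (norm_nonneg _) hm0
      by_cases hsA : x + s • e ∈ A <;> by_cases hsB : x + s • e ∈ B <;>
        simp [indicator, hsA, hsB, hM0, hM, -Real.norm_eq_abs]
    · exact mul_le_mul_of_nonneg_left (ENNReal.toReal_le_of_le_ofReal hD hvol)
        (mul_nonneg hm0 hM0)
  · intro s hs
    by_cases hgs : g (x + s • e) = 0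
    · simp [indicator, hgs]
    · have hiff : x + s • e ∈ A ↔ x + s • e ∈ B := not_not.1 fun h => hs ⟨hgs, h⟩
      by_cases hsB : x + s • e ∈ B <;> simp [indicator, hiff, hsB]

lemma lipschitzOnWith_lineAverage_indicator {P : Type*} [PseudoMetricSpace P] {κ : ℝ → ℝ}
    (hκ : Continuous κ) (hκc : HasCompactSupport κ) {g : E → ℝ} (hg : Continuous g) {m M C : ℝ}
    (hm : ∀ s, ‖κ s‖ ≤ m) (hM : ∀ x, ‖g x‖ ≤ M) (hC : 0 ≤ C) {A : P → Set E}
    (hA : ∀ ψ, MeasurableSet (A ψ)) {e : E} {W : Set P} (x : E)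
    (hvol : ∀ ψ ∈ W, ∀ ψ' ∈ W, volume {s : ℝ | g (x + s • e) ≠ 0 ∧
      ¬(x + s • e ∈ A ψ ↔ x + s • e ∈ A ψ')} ≤ ENNReal.ofReal (C * dist ψ ψ')) :
    LipschitzOnWith (Real.nnabs (((fun p : ℝ × E => p.2 - p.1 • e) '' tsupport κ ×ˢ tsupport g
      ).indicator (fun _ => m * M * C) x)) (fun ψ => lineAverage κ e ((A ψ).indicator g) x) W := by
  have hm0 : 0 ≤ m := (norm_nonneg _).trans (hm 0)
  have hM0 : 0 ≤ M := (norm_nonneg _).trans (hM 0)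
  set K : Set E := (fun p : ℝ × E => p.2 - p.1 • e) '' tsupport κ ×ˢ tsupport g
  refine LipschitzOnWith.of_dist_le_mul fun ψ hψ ψ' hψ' => ?_
  by_cases hx : x ∈ K
  · rw [indicator_of_mem hx, Real.coe_nnabs, abs_of_nonneg (by positivity), mul_assoc]
    exact dist_lineAverage_indicator_le hκ hκc hg hm hM (hA ψ) (hA ψ') e x (by positivity)
      (hvol ψ hψ ψ' hψ')
  · have hzero (B : Set E) : lineAverage κ e (B.indicator g) x = 0 := by
      have hB : tsupport (B.indicator g) ⊆ tsupport g :=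
        closure_mono (support_indicator.trans_subset inter_subset_right)
      exact Function.notMem_support.1 fun hxs =>
        hx (image_mono (prod_mono_right hB) (support_lineAverage_subset _ _ _ hxs))
    rw [hzero, hzero, dist_self]
    positivity

variable [FiniteDimensional ℝ E] {μ : Measure E} [μ.IsAddHaarMeasure]

lemma measurePreserving_prod_add_smul (e : E) :
    MeasurePreserving (fun p : ℝ × E => (p.1, p.2 + p.1 • e))
      (volume.prod μ) (volume.prod μ) :=
  (MeasurePreserving.id _).skew_product (g := fun s x => x + s • e) (by fun_prop)
    (Eventually.of_forall fun s => map_add_right_eq_self μ (s • e))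

lemma integrable_prod_mul_add_smul {κ : ℝ → ℝ} (hκ : Integrable κ) (e : E) {F : E → ℝ}
    (hF : Integrable F μ) :
    Integrable (fun p : ℝ × E => κ p.1 * F (p.2 + p.1 • e)) (volume.prod μ) :=
  (measurePreserving_prod_add_smul e).integrable_comp_of_integrable (hκ.mul_prod hF)

lemma integrable_lineAverage {κ : ℝ → ℝ} (hκ : Integrable κ) (e : E) {F : E → ℝ}
    (hF : Integrable F μ) : Integrable (lineAverage κ e F) μ :=
  (integrable_prod_mul_add_smul hκ e hF).integral_prod_right

lemma integral_lineAverage {κ : ℝ → ℝ} (hκ : Integrable κ) (e : E) {F : E → ℝ}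
    (hF : Integrable F μ) : ∫ x, lineAverage κ e F x ∂μ = (∫ s, κ s) * ∫ x, F x ∂μ := by
  have hslice (s : ℝ) : ∫ x, κ s * F (x + s • e) ∂μ = κ s * ∫ x, F x ∂μ := by
    rw [integral_const_mul, integral_add_right_eq_self F (s • e)]
  simp_rw [lineAverage, ← integral_integral_swap (f := fun s x => κ s * F (x + s • e))
    (integrable_prod_mul_add_smul hκ e hF), hslice, integral_mul_const]

end LineAverage

lemma aestronglyMeasurable_fderiv_of_finiteDimensional {α P : Type*} [MeasurableSpace α]
    {μ : Measure α} [NormedAddCommGroup P] [NormedSpace ℝ P] [FiniteDimensional ℝ P] {ψ₀ : P}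
    {h : P → α → ℝ} (hmeas : ∀ ψ, AEStronglyMeasurable (h ψ) μ)
    (hdiff : ∀ᵐ x ∂μ, DifferentiableAt ℝ (fun ψ => h ψ x) ψ₀) :
    AEStronglyMeasurable (fun x => fderiv ℝ (fun ψ => h ψ x) ψ₀) μ := by
  have hdir (v : P) : AEStronglyMeasurable (fun x => fderiv ℝ (fun ψ => h ψ x) ψ₀ v) μ := by
    refine aestronglyMeasurable_of_tendsto_ae (u := atTop)
      (f := fun (n : ℕ) x => (n : ℝ) • (h (ψ₀ + (n : ℝ)⁻¹ • v) x - h ψ₀ x))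
      (fun n => ((hmeas _).sub (hmeas ψ₀)).const_smul (n : ℝ)) ?_
    filter_upwards [hdiff] with x hx
    exact (hx.hasFDerivAt.lim_real v).comp tendsto_natCast_atTop_atTop
  let b := Module.finBasis ℝ P
  have hexpand (L : P →L[ℝ] ℝ) : L = ∑ j, L (b j) • (b.coord j).toContinuousLinearMap := by
    ext v
    have := congrArg L (b.sum_repr v)
    simp only [map_sum, map_smul, smul_eq_mul] at this
    simpa [mul_comm] using this.symm
  rw [funext fun x => hexpand (fderiv ℝ (fun ψ => h ψ x) ψ₀)]
  exact Finset.aestronglyMeasurable_fun_sum _ fun j _ => (hdir (b j)).smul_const _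

section Smearing

variable {E P : Type*} [NormedAddCommGroup E] [NormedSpace ℝ E]
  [MeasurableSpace E] [BorelSpace E] {μ : Measure E} [NormedAddCommGroup P] [NormedSpace ℝ P]
  {A : P → Set E} {ψ₀ : P} {g : E → ℝ} {κ : ℝ → ℝ} {e : E}

/-- At almost every base point `x`, the mass that `A ψ` cuts out of the line `x + ℝ e` is
differentiable in `ψ` at `ψ₀`, for all continuous densities supported where `g` is. -/
def MassDifferentiableOnLines (μ : Measure E) (A : P → Set E) (ψ₀ : P) (g : E → ℝ) (e : E) :
    Prop :=
  ∀ᵐ x ∂μ, ∀ k : ℝ → ℝ, Continuous k → HasCompactSupport k →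
    tsupport k ⊆ (fun s : ℝ => x + s • e) ⁻¹' tsupport g →
      DifferentiableAt ℝ (fun ψ => ∫ s in {s : ℝ | x + s • e ∈ A ψ}, k s) ψ₀

lemma MassDifferentiableOnLines.ae_differentiableAt_lineAverage (hA : ∀ ψ, MeasurableSet (A ψ))
    (hg : Continuous g) (hκ : Continuous κ) (hκc : HasCompactSupport κ)
    (hlines : MassDifferentiableOnLines μ A ψ₀ g e) :
    ∀ᵐ x ∂μ, DifferentiableAt ℝ (fun ψ => lineAverage κ e ((A ψ).indicator g) x) ψ₀ := by
  filter_upwards [hlines] with x hx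
  have hline : Continuous fun s : ℝ => x + s • e := by fun_prop
  simp_rw [lineAverage_indicator κ e (hA _)]
  exact hx _ (hκ.mul (hg.comp hline)) hκc.mul_right
    (tsupport_mul_subset_right.trans (tsupport_comp_subset_preimage g hline))

lemma differentiableAt_setIntegral_of_lines [FiniteDimensional ℝ E] [FiniteDimensional ℝ P]
    [μ.IsAddHaarMeasure] (hA : ∀ ψ, MeasurableSet (A ψ)) (hg : Continuous g)
    (hgc : HasCompactSupport g)
    (hlines : MassDifferentiableOnLines μ A ψ₀ g e)
    {W : Set P} (hW : W ∈ 𝓝 ψ₀) {C : ℝ} (hC : 0 ≤ C)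
    (hvol : ∀ ψ ∈ W, ∀ ψ' ∈ W, ∀ x, volume {s : ℝ | g (x + s • e) ≠ 0 ∧
      ¬(x + s • e ∈ A ψ ↔ x + s • e ∈ A ψ')} ≤ ENNReal.ofReal (C * dist ψ ψ')) :
    DifferentiableAt ℝ (fun ψ => ∫ x in A ψ, g x ∂μ) ψ₀ := by
  let φ : ContDiffBump (0 : ℝ) := default
  set κ : ℝ → ℝ := φ.normed volume
  have hκ : Continuous κ := φ.continuous_normed
  have hκc : HasCompactSupport κ := φ.hasCompactSupport_normed
  have hκi : Integrable κ := hκ.integrable_of_hasCompactSupport hκc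
  obtain ⟨m, hm⟩ := hκ.bounded_above_of_compact_support hκc
  obtain ⟨M, hM⟩ := hg.bounded_above_of_compact_support hgc
  have hind ψ : Integrable ((A ψ).indicator g) μ :=
    (hg.integrable_of_hasCompactSupport hgc).indicator (hA ψ)
  set h : P → E → ℝ := fun ψ => lineAverage κ e ((A ψ).indicator g)
  have hh ψ : Integrable (h ψ) μ := integrable_lineAverage hκi e (hind ψ)
  have hmass : (fun ψ => ∫ x in A ψ, g x ∂μ) = fun ψ => ∫ x, h ψ x ∂μ := by
    ext ψ
    rw [integral_lineAverage hκi e (hind ψ), φ.integral_normed, one_mul,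
      integral_indicator (hA ψ)]
  have hK : IsCompact ((fun p : ℝ × E => p.2 - p.1 • e) '' tsupport κ ×ˢ tsupport g) :=
    (hκc.isCompact.prod hgc.isCompact).image (by fun_prop)
  have hdiff := hlines.ae_differentiableAt_lineAverage hA hg hκ hκc
  rw [hmass]
  exact (hasFDerivAt_integral_of_dominated_loc_of_lip hW
    (Eventually.of_forall fun ψ => (hh ψ).aestronglyMeasurable) (hh ψ₀)
    (aestronglyMeasurable_fderiv_of_finiteDimensional
      (fun ψ => (hh ψ).aestronglyMeasurable) hdiff)
    (Eventually.of_forall fun x => lipschitzOnWith_lineAverage_indicator hκ hκc hg hm hM hC hA x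
      fun ψ hψ ψ' hψ' => hvol ψ hψ ψ' hψ' x)
    ((integrable_indicator_iff hK.measurableSet).2 (integrableOn_const hK.measure_lt_top.ne))
    (hdiff.mono fun x hx => hx.hasFDerivAt)).2.differentiableAt

end Smearing

section HausdorffNull

variable {E : Type*} [NormedAddCommGroup E] [NormedSpace ℝ E] [FiniteDimensional ℝ E]
  [MeasurableSpace E] [BorelSpace E] {T : Set E}

lemma ae_forall_add_smul_notMem_of_hausdorffMeasure_eq_zero {μ : Measure E} [μ.IsAddHaarMeasure]
    (hT : μH[(Module.finrank ℝ E : ℝ) - 1] T = 0) {e : E} (he : e ≠ 0) :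
    ∀ᵐ x ∂μ, ∀ s : ℝ, x + s • e ∉ T := by
  set n := Module.finrank ℝ (E ⧸ Submodule.span ℝ {e})
  have hdim : (Module.finrank ℝ E : ℝ) - 1 = Fintype.card (Fin n) := by
    rw [← Submodule.finrank_quotient_add_finrank (Submodule.span ℝ {e}),
      finrank_span_singleton he, Fintype.card_fin]
    push_cast
    ring
  let b := (Module.finBasis ℝ (E ⧸ Submodule.span ℝ {e})).equivFun
  let q : E →ₗ[ℝ] Fin n → ℝ := b.toLinearMap ∘ₗ (Submodule.span ℝ {e}).mkQ
  have hq : Function.Surjective q := b.surjective.comp (Submodule.mkQ_surjective _)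
  have hqe : q e = 0 := by
    simp [q, (Submodule.Quotient.mk_eq_zero _).2 (Submodule.mem_span_singleton_self e)]
  have himage : volume (q '' T) = 0 := by
    rw [hdim] at hT
    have hle := q.toContinuousLinearMap.lipschitz.hausdorffMeasure_image_le
      (Nat.cast_nonneg (Fintype.card (Fin n))) T
    rw [hT, mul_zero, hausdorffMeasure_pi_real] at hle
    exact le_antisymm hle bot_le
  have hmem := (ae_comp_linearMap_mem_iff q μ volume hq
    (measurableSet_toMeasurable volume (q '' T)).compl).2
      (measure_eq_zero_iff_ae_notMem.1 ((measure_toMeasurable _).trans himage))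
  filter_upwards [hmem] with x hx s hs
  exact hx (subset_toMeasurable _ _ ⟨_, hs, by simp [hqe]⟩)

lemma dense_compl_of_hausdorffMeasure_eq_zero [Nontrivial E]
    (hT : μH[(Module.finrank ℝ E : ℝ) - 1] T = 0) : Dense Tᶜ := by
  obtain ⟨e, he⟩ := exists_ne (0 : E)
  refine Measure.dense_of_ae (μ := Measure.addHaar) ?_
  filter_upwards [ae_forall_add_smul_notMem_of_hausdorffMeasure_eq_zero hT he] with x hx
  simpa using hx 0

lemma exists_mem_forall_add_smul_notMem_of_hausdorffMeasure_eq_zero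
    (hT : μH[(Module.finrank ℝ E : ℝ) - 1] T = 0) {e : E} (he : e ≠ 0) {O : Set E}
    (hO : IsOpen O) (hne : O.Nonempty) : ∃ x ∈ O, ∀ s : ℝ, x + s • e ∉ T := by
  obtain ⟨x, hxT, hxO⟩ := (Measure.dense_of_ae
    (ae_forall_add_smul_notMem_of_hausdorffMeasure_eq_zero (μ := Measure.addHaar) hT he)
    ).exists_mem_open hO hne
  exact ⟨x, hxO, hxT⟩

lemma isPreconnected_convex_sdiff_of_hausdorffMeasure_eq_zero {B : Set E} (hB : Convex ℝ B)
    (hBo : IsOpen B) (hT : μH[(Module.finrank ℝ E : ℝ) - 1] T = 0) : IsPreconnected (B \ T) := by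
  rintro O₁ O₂ hO₁ hO₂ hcover ⟨p, hp, hpO₁⟩ ⟨q, hq, hqO₂⟩
  rcases eq_or_ne p q with rfl | hpq
  · exact ⟨p, hp, hpO₁, hqO₂⟩
  obtain ⟨x, ⟨⟨hx, hxO₁⟩, hxq, hxqO₂⟩, hxT⟩ :=
    exists_mem_forall_add_smul_notMem_of_hausdorffMeasure_eq_zero hT (sub_ne_zero.2 hpq.symm)
      ((hBo.inter hO₁).inter ((hBo.inter hO₂).preimage (continuous_add_const (q - p))))
      ⟨p, ⟨hp.1, hpO₁⟩, by simpa using ⟨hq.1, hqO₂⟩⟩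
  have hsegment : segment ℝ x (x + (q - p)) ⊆ B \ T := by
    intro z hz
    refine ⟨hB.segment_subset hx hxq hz, ?_⟩
    rw [segment_eq_image'] at hz
    obtain ⟨s, -, rfl⟩ := hz
    simpa using hxT s
  obtain ⟨z, hz, hzO⟩ := (convex_segment x (x + (q - p))).isPreconnected O₁ O₂ hO₁ hO₂
    (hsegment.trans hcover) ⟨x, left_mem_segment ℝ _ _, hxO₁⟩
    ⟨x + (q - p), right_mem_segment ℝ _ _, hxqO₂⟩
  exact ⟨z, hsegment hz, hzO⟩

lemma isPreconnected_sdiff_of_hausdorffMeasure_eq_zero {U : Set E} (hU : IsPreconnected U)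
    (hUo : IsOpen U) (hT : μH[(Module.finrank ℝ E : ℝ) - 1] T = 0) : IsPreconnected (U \ T) := by
  rcases subsingleton_or_nontrivial E with _ | _
  · exact Set.subsingleton_of_subsingleton.isPreconnected
  rintro O₁ O₂ hO₁ hO₂ hcover ⟨p, hp, hpO₁⟩ ⟨q, hq, hqO₂⟩
  have hclosure : U ⊆ closure ((U \ T) ∩ O₁) ∪ closure ((U \ T) ∩ O₂) := by
    rw [← closure_union, ← inter_union_distrib_left, inter_eq_left.2 hcover]
    exact (dense_compl_of_hausdorffMeasure_eq_zero hT).open_subset_closure_inter hUo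
  obtain ⟨z, hzU, hz₁, hz₂⟩ := isPreconnected_closed_iff.1 hU _ _ isClosed_closure isClosed_closure
    hclosure ⟨p, hp.1, subset_closure ⟨hp, hpO₁⟩⟩ ⟨q, hq.1, subset_closure ⟨hq, hqO₂⟩⟩
  obtain ⟨r, hr, hball⟩ := Metric.isOpen_iff.1 hUo z hzU
  have hmeet {O : Set E} (hz : z ∈ closure ((U \ T) ∩ O)) : (Metric.ball z r \ T ∩ O).Nonempty := by
    obtain ⟨x, hxr, hx, hxO⟩ := mem_closure_iff.1 hz _ Metric.isOpen_ball (Metric.mem_ball_self hr)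
    exact ⟨x, ⟨hxr, hx.2⟩, hxO⟩
  obtain ⟨x, hx, hxO⟩ := isPreconnected_convex_sdiff_of_hausdorffMeasure_eq_zero
    (convex_ball z r) Metric.isOpen_ball hT O₁ O₂ hO₁ hO₂
    ((sdiff_subset_sdiff_left hball).trans hcover) (hmeet hz₁) (hmeet hz₂)
  exact ⟨x, ⟨hball hx.1, hx.2⟩, hxO⟩

end HausdorffNull

section CellMass

variable {E P ι : Type*} [NormedAddCommGroup E] [NormedSpace ℝ E]
  [NormedAddCommGroup P] [NormedSpace ℝ P] {ψ₀ : P} {c e : E}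

lemma abs_le_abs_sub_of_not_nonneg_iff {a b : ℝ} (h : ¬(0 ≤ a ↔ 0 ≤ b)) : |a| ≤ |a - b| := by
  rcases le_or_gt 0 a with ha | ha <;> rcases le_or_gt 0 b with hb | hb
  · exact absurd (iff_of_true ha hb) h
  · rw [abs_of_nonneg ha]; exact le_trans (by linarith) (le_abs_self _)
  · rw [abs_of_neg ha]; exact le_trans (by linarith) (neg_le_abs _)
  · exact absurd (iff_of_false ha.not_ge hb.not_ge) h

lemma exists_nhds_volume_sign_change_le_of_slope_ne_zero {f : P × E → ℝ} {f' : P × E →L[ℝ] ℝ}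
    (hf : HasStrictFDerivAt f f' (ψ₀, c)) (he : f' (0, e) ≠ 0) :
    ∃ W ∈ 𝓝 ψ₀, ∃ V ∈ 𝓝 c, ∃ C : ℝ, 0 ≤ C ∧ ∀ ψ ∈ W, ∀ ψ' ∈ W, ∀ x,
      volume {s : ℝ | x + s • e ∈ V ∧ ¬(0 ≤ f (ψ, x + s • e) ↔ 0 ≤ f (ψ', x + s • e))} ≤
        ENNReal.ofReal (C * dist ψ ψ') := by
  obtain ⟨U, hU, hexpand⟩ := exists_nhds_mul_abs_le_abs_sub hf he
  obtain ⟨K, U', hU', hlip⟩ := hf.exists_lipschitzOnWith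
  obtain ⟨W, hW, V, hV, hWV⟩ := mem_nhds_prod_iff.1 (inter_mem hU hU')
  set a := |f' (0, e)| / 2
  have ha : 0 < a := half_pos (abs_pos.2 he)
  refine ⟨W, hW, V, hV, 2 * K / a, by positivity, fun ψ hψ ψ' hψ' x => ?_⟩
  have hsmall {s : ℝ} (hs : x + s • e ∈ V)
      (hsign : ¬(0 ≤ f (ψ, x + s • e) ↔ 0 ≤ f (ψ', x + s • e))) :
      |f (ψ, x + s • e)| ≤ K * dist ψ ψ' := by
    refine (abs_le_abs_sub_of_not_nonneg_iff hsign).trans ?_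
    have := hlip.dist_le_mul _ (hWV (mk_mem_prod hψ hs)).2 _ (hWV (mk_mem_prod hψ' hs)).2
    rwa [Real.dist_eq, dist_prod_same_right] at this
  refine (Real.volume_le_diam _).trans (Metric.ediam_le ?_)
  rintro s ⟨hs, hs_sign⟩ t ⟨ht, ht_sign⟩
  have hline : (ψ, x + t • e) + (s - t) • ((0 : P), e) = (ψ, x + s • e) := by
    ext <;> simp [sub_smul]
  have hst := hexpand _ (hWV (mk_mem_prod hψ ht)).1 (s - t)
    (by rw [hline]; exact (hWV (mk_mem_prod hψ hs)).1)
  rw [hline] at hst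
  rw [edist_dist, Real.dist_eq]
  refine ENNReal.ofReal_le_ofReal ?_
  rw [div_mul_eq_mul_div, le_div_iff₀ ha, mul_comm]
  calc a * |s - t| ≤ |f (ψ, x + s • e) - f (ψ, x + t • e)| := hst
    _ ≤ |f (ψ, x + s • e)| + |f (ψ, x + t • e)| := abs_sub _ _
    _ ≤ K * dist ψ ψ' + K * dist ψ ψ' := add_le_add (hsmall hs hs_sign) (hsmall ht ht_sign)
    _ = 2 * K * dist ψ ψ' := by ring

lemma exists_nhds_volume_sign_change_le {f : P × E → ℝ} {f' : P × E →L[ℝ] ℝ}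
    (hf : HasStrictFDerivAt f f' (ψ₀, c)) (he : f (ψ₀, c) = 0 → f' (0, e) ≠ 0) :
    ∃ W ∈ 𝓝 ψ₀, ∃ V ∈ 𝓝 c, ∃ C : ℝ, 0 ≤ C ∧ ∀ ψ ∈ W, ∀ ψ' ∈ W, ∀ x,
      volume {s : ℝ | x + s • e ∈ V ∧ ¬(0 ≤ f (ψ, x + s • e) ↔ 0 ≤ f (ψ', x + s • e))} ≤
        ENNReal.ofReal (C * dist ψ ψ') := by
  by_cases hzero : f (ψ₀, c) = 0
  · exact exists_nhds_volume_sign_change_le_of_slope_ne_zero hf (he hzero)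
  have hconst : ∀ᶠ p in 𝓝 (ψ₀, c), 0 ≤ f p ↔ 0 ≤ f (ψ₀, c) := by
    rcases Ne.lt_or_gt hzero with hneg | hpos
    · exact (hf.continuousAt.eventually (gt_mem_nhds hneg)).mono fun p hp =>
        iff_of_false hp.not_ge hneg.not_ge
    · exact (hf.continuousAt.eventually (lt_mem_nhds hpos)).mono fun p hp =>
        iff_of_true hp.le hpos.le
  obtain ⟨W, hW, V, hV, hWV⟩ := mem_nhds_prod_iff.1 hconst
  refine ⟨W, hW, V, hV, 0, le_rfl, fun ψ hψ ψ' hψ' x => ?_⟩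
  have hempty : {s : ℝ | x + s • e ∈ V ∧
      ¬(0 ≤ f (ψ, x + s • e) ↔ 0 ≤ f (ψ', x + s • e))} = ∅ :=
    eq_empty_of_forall_notMem fun s ⟨hs, hsign⟩ =>
      hsign ((hWV (mk_mem_prod hψ hs)).trans (hWV (mk_mem_prod hψ' hs)).symm)
  simp [hempty]

lemma exists_nhds_volume_cell_change_le [Finite ι] {Ω : Set E} {f : ι → P × E → ℝ}
    {f' : ι → P × E →L[ℝ] ℝ} (hf : ∀ l, HasStrictFDerivAt (f l) (f' l) (ψ₀, c))
    (he : ∀ l, f l (ψ₀, c) = 0 → f' l (0, e) ≠ 0) :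
    ∃ W ∈ 𝓝 ψ₀, ∃ V ∈ 𝓝 c, ∃ C : ℝ, 0 ≤ C ∧ ∀ ψ ∈ W, ∀ ψ' ∈ W, ∀ x,
      volume {s : ℝ | x + s • e ∈ V ∧ ¬(x + s • e ∈ cell Ω f ψ ↔ x + s • e ∈ cell Ω f ψ')} ≤
        ENNReal.ofReal (C * dist ψ ψ') := by
  have := Fintype.ofFinite ι
  choose W hW V hV C hC hvol using fun l => exists_nhds_volume_sign_change_le (hf l) (he l)
  refine ⟨⋂ l, W l, iInter_mem.2 hW, ⋂ l, V l, iInter_mem.2 hV, ∑ l, C l,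
    Finset.sum_nonneg fun l _ => hC l, fun ψ hψ ψ' hψ' x => ?_⟩
  have hsubset : {s : ℝ | x + s • e ∈ ⋂ l, V l ∧
      ¬(x + s • e ∈ cell Ω f ψ ↔ x + s • e ∈ cell Ω f ψ')} ⊆
      ⋃ l, {s : ℝ | x + s • e ∈ V l ∧
        ¬(0 ≤ f l (ψ, x + s • e) ↔ 0 ≤ f l (ψ', x + s • e))} := by
    rintro s ⟨hs, hchange⟩
    by_contra hsign
    simp only [mem_iUnion, mem_ofPred_eq, not_exists, not_and, not_not] at hsign
    exact hchange (and_congr_right fun _ => forall_congr' fun l => hsign l (mem_iInter.1 hs l))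
  refine (measure_mono hsubset).trans ((measure_iUnion_fintype_le _ _).trans ?_)
  rw [Finset.sum_mul, ENNReal.ofReal_sum_of_nonneg fun l _ => mul_nonneg (hC l) dist_nonneg]
  exact Finset.sum_le_sum fun l _ => hvol l ψ (mem_iInter.1 hψ l) ψ' (mem_iInter.1 hψ' l) x

lemma eventually_fderiv_apply_ne_zero {f : P × E → ℝ} (hf : ContDiffAt ℝ 1 f (ψ₀, c))
    (he : f (ψ₀, c) = 0 → fderiv ℝ f (ψ₀, c) (0, e) ≠ 0) :
    ∀ᶠ x in 𝓝 c, f (ψ₀, x) = 0 → fderiv ℝ f (ψ₀, x) (0, e) ≠ 0 := by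
  have hslice : Tendsto (fun x : E => (ψ₀, x)) (𝓝 c) (𝓝 (ψ₀, c)) :=
    (Continuous.prodMk_right ψ₀).tendsto c
  by_cases hzero : f (ψ₀, c) = 0
  · have hcont : ContinuousAt (fun p => fderiv ℝ f p (0, e)) (ψ₀, c) :=
      (hf.continuousAt_fderiv one_ne_zero).clm_apply continuousAt_const
    exact (hslice.eventually (hcont.eventually_ne (he hzero))).mono fun _ h _ => h
  · exact (hslice.eventually (hf.continuousAt.eventually_ne hzero)).mono fun _ h h0 => absurd h0 h

lemma exists_forall_fderiv_apply_ne_zero [Finite ι] {f : ι → P × E → ℝ}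
    (hgrad : ∀ l, f l (ψ₀, c) = 0 → ∃ e, fderiv ℝ (f l) (ψ₀, c) (0, e) ≠ 0) :
    ∃ e : E, ∀ l, f l (ψ₀, c) = 0 → fderiv ℝ (f l) (ψ₀, c) (0, e) ≠ 0 := by
  obtain ⟨e, he⟩ := Module.Dual.exists_forall_ne_zero_of_forall_exists
    (fun l : {l : ι // f l (ψ₀, c) = 0} =>
      (fderiv ℝ (f l) (ψ₀, c)).toLinearMap ∘ₗ LinearMap.inr ℝ P E)
    fun l => hgrad l l.2
  exact ⟨e, fun l hl => he ⟨l, hl⟩⟩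

variable [FiniteDimensional ℝ E] [MeasurableSpace E] [BorelSpace E]

lemma massDifferentiableOnLines_cell [CompleteSpace P] [Finite ι] {μ : Measure E}
    [μ.IsAddHaarMeasure] {Ω : Set E} (hΩ : IsOpen Ω) {f : ι → P × E → ℝ} {g : E → ℝ}
    (hgΩ : tsupport g ⊆ Ω) (hf : ∀ l, ∀ x ∈ tsupport g, ContDiffAt ℝ 1 (f l) (ψ₀, x))
    (hslope : ∀ l, ∀ x ∈ tsupport g, f l (ψ₀, x) = 0 → fderiv ℝ (f l) (ψ₀, x) (0, e) ≠ 0)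
    (he : e ≠ 0) (hcodim : μH[(Module.finrank ℝ E : ℝ) - 1]
      {x ∈ Ω | ∃ l m, l ≠ m ∧ f l (ψ₀, x) = 0 ∧ f m (ψ₀, x) = 0} = 0) :
    MassDifferentiableOnLines μ (cell Ω f) ψ₀ g e := by
  filter_upwards [ae_forall_add_smul_notMem_of_hausdorffMeasure_eq_zero hcodim he]
    with x hx k hk hkc hkg
  refine MassDifferentiableNear.differentiableAt_setIntegral hk hkc fun s hs => ?_
  have hsg : x + s • e ∈ tsupport g := hkg hs
  have hline : HasStrictFDerivAt (fun q : P × ℝ => (q.1, x + q.2 • e))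
      ((ContinuousLinearMap.fst ℝ P ℝ).prod ((ContinuousLinearMap.snd ℝ P ℝ).smulRight e))
      (ψ₀, s) :=
    hasStrictFDerivAt_fst.prodMk
      (((ContinuousLinearMap.snd ℝ P ℝ).smulRight e).hasStrictFDerivAt.const_add x)
  refine massDifferentiableNear_cell_real (Ω := (fun s : ℝ => x + s • e) ⁻¹' Ω)
    (f := fun l q => f l (q.1, x + q.2 • e)) (hΩ.preimage (by fun_prop)) (hgΩ hsg)
    (fun l => ((hf l _ hsg).hasStrictFDerivAt one_ne_zero).comp (ψ₀, s) hline)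
    (fun l hl => by simpa using hslope l _ hsg hl) fun l m hl hm => ?_
  by_contra hlm
  exact hx s ⟨hgΩ hsg, l, m, hlm, hl, hm⟩

theorem differentiableAt_setIntegral_cell [FiniteDimensional ℝ P] [Finite ι] {μ : Measure E}
    [μ.IsAddHaarMeasure] {Ω : Set E} (hΩ : IsOpen Ω) {f : ι → P × E → ℝ}
    (hmeas : ∀ ψ, MeasurableSet (cell Ω f ψ)) (hf : ∀ l, ∀ x ∈ Ω, ContDiffAt ℝ 1 (f l) (ψ₀, x))
    (hgrad : ∀ l, ∀ x ∈ Ω, f l (ψ₀, x) = 0 → ∃ e, fderiv ℝ (f l) (ψ₀, x) (0, e) ≠ 0)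
    (hcodim : μH[(Module.finrank ℝ E : ℝ) - 1]
      {x ∈ Ω | ∃ l m, l ≠ m ∧ f l (ψ₀, x) = 0 ∧ f m (ψ₀, x) = 0} = 0)
    {g : E → ℝ} (hg : Continuous g) (hgc : HasCompactSupport g) (hgΩ : tsupport g ⊆ Ω) :
    DifferentiableAt ℝ (fun ψ => ∫ x in cell Ω f ψ, g x ∂μ) ψ₀ := by
  have : CompleteSpace P := FiniteDimensional.complete ℝ P
  refine MassDifferentiableNear.differentiableAt_setIntegral hg hgc fun c hcg => ?_
  have hc : c ∈ Ω := hgΩ hcg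
  have hcont l : ContinuousAt (f l) (ψ₀, c) := (hf l c hc).continuousAt
  by_cases hneg : ∃ l, f l (ψ₀, c) < 0
  · obtain ⟨l, hl⟩ := hneg
    exact massDifferentiableNear_cell_of_neg (hcont l) hl
  by_cases hpos : ∀ l, 0 < f l (ψ₀, c)
  · exact massDifferentiableNear_cell_of_forall_pos hΩ hc hcont hpos
  push Not at hneg hpos
  obtain ⟨l₀, hl₀⟩ := hpos
  obtain ⟨e, he⟩ := exists_forall_fderiv_apply_ne_zero fun l => hgrad l c hc
  have he0 : e ≠ 0 := by
    rintro rfl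
    exact he l₀ (hl₀.antisymm (hneg l₀)) (map_zero _)
  obtain ⟨W, hW, V, hV, C, hC, hvol⟩ := exists_nhds_volume_cell_change_le (Ω := Ω)
    (fun l => (hf l c hc).hasStrictFDerivAt one_ne_zero) he
  have hslope : ∀ᶠ x in 𝓝 c, ∀ l, f l (ψ₀, x) = 0 → fderiv ℝ (f l) (ψ₀, x) (0, e) ≠ 0 :=
    eventually_all.2 fun l => eventually_fderiv_apply_ne_zero (hf l c hc) (he l)
  refine ⟨_, inter_mem hV (hslope.and (hΩ.mem_nhds hc)), fun k hk hkc hkV => ?_⟩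
  have hlines := massDifferentiableOnLines_cell (μ := μ) hΩ (fun x hx => (hkV hx).2.2)
    (fun l x hx => hf l x (hkV hx).2.2) (fun l x hx => (hkV hx).2.1 l) he0 hcodim
  exact differentiableAt_setIntegral_of_lines hmeas hk hkc hlines hW hC fun ψ hψ ψ' hψ' x =>
    (measure_mono fun _ hs => mem_ofPred_eq ▸ ⟨(hkV (subset_tsupport k hs.1)).1, hs.2⟩).trans
      (hvol ψ hψ ψ' hψ' x)

end CellMass

section LevelSet

variable {E : Type*} [NormedAddCommGroup E] [NormedSpace ℝ E]

lemma exists_apply_eq_one_of_ne_zero {ℓ : E →L[ℝ] ℝ} (hℓ : ℓ ≠ 0) : ∃ e, ℓ e = 1 :=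
  LinearMap.surjective (f := ℓ.toLinearMap) (ContinuousLinearMap.coe_injective.ne hℓ) 1

lemma isOpen_and_nonempty_setOf_projection_mem_ball {ℓ : E →L[ℝ] ℝ} {e : E} (he : ℓ e = 1) {r : ℝ}
    (hr : 0 < r) :
    IsOpen {x ∈ Metric.ball 0 r | x - ℓ x • e ∈ Metric.ball 0 r ∧ ℓ x ∈ Ioo (-1) 0} ∧
      {x ∈ Metric.ball 0 r | x - ℓ x • e ∈ Metric.ball 0 r ∧ ℓ x ∈ Ioo (-1) 0}.Nonempty := by
  refine ⟨Metric.isOpen_ball.inter <| (Metric.isOpen_ball.preimage (by fun_prop)).inter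
    (isOpen_Ioo.preimage ℓ.continuous), ?_⟩
  have hball : ∀ᶠ s : ℝ in 𝓝[<] 0, s • e ∈ Metric.ball 0 r := by
    have : Tendsto (fun s : ℝ => s • e) (𝓝 0) (𝓝 0) := by
      simpa using (tendsto_id (x := 𝓝 (0 : ℝ))).smul_const e
    exact nhdsWithin_le_nhds (this (Metric.ball_mem_nhds 0 hr))
  obtain ⟨s, hs, hs_mem⟩ := (hball.and (Ioo_mem_nhdsLT (by norm_num : (-1 : ℝ) < 0))).exists
  exact ⟨s • e, hs, by simpa [he] using hr, by simpa [he] using hs_mem⟩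

variable [FiniteDimensional ℝ E] [MeasurableSpace E] [BorelSpace E] (μ : Measure E)
  [μ.IsAddHaarMeasure]

-- The slab of width `t` contains the image of the slab of width `1` under the map which scales the
-- direction `e` transverse to `ker ℓ` by `t`, and this map has determinant `t`.
lemma exists_pos_mul_le_measure_inter_slab {ℓ : E →L[ℝ] ℝ} (hℓ : ℓ ≠ 0) {O : Set E}
    (hO : O ∈ 𝓝 0) :
    ∃ c : ℝ, 0 < c ∧ ∀ t ∈ Ioo (0 : ℝ) 1,
      ENNReal.ofReal (c * t) ≤ μ (O ∩ ℓ ⁻¹' Ico (-t) 0) := by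
  obtain ⟨e, he⟩ := exists_apply_eq_one_of_ne_zero hℓ
  obtain ⟨r, hr, hball⟩ := Metric.mem_nhds_iff.1 hO
  obtain ⟨hSo, hSne⟩ := isOpen_and_nonempty_setOf_projection_mem_ball he hr
  set S := {x ∈ Metric.ball 0 r | x - ℓ x • e ∈ Metric.ball 0 r ∧ ℓ x ∈ Ioo (-1) 0}
  have hSfin : μ S ≠ ∞ := measure_ne_top_of_subset (sep_subset _ _) measure_ball_lt_top.ne
  refine ⟨(μ S).toReal, ENNReal.toReal_pos (hSo.measure_pos μ hSne).ne' hSfin, fun t ht => ?_⟩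
  let D : E →ₗ[ℝ] E := LinearMap.transvection ((t - 1) • ℓ.toLinearMap) e
  have hdet : LinearMap.det D = t := by
    simp [D, LinearMap.transvection.det, he]
  have hℓD (x : E) : ℓ (D x) = t * ℓ x := by
    simp only [D, LinearMap.transvection.apply, LinearMap.smul_apply, ContinuousLinearMap.coe_coe,
      smul_eq_mul, map_add, map_smul, he]
    ring
  have himage : D '' S ⊆ O ∩ ℓ ⁻¹' Ico (-t) 0 := by
    rintro _ ⟨x, ⟨hx, hx_proj, hℓx⟩, rfl⟩
    refine ⟨hball ?_, ?_⟩
    · have hD : D x = t • x + (1 - t) • (x - ℓ x • e) := by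
        simp only [D, LinearMap.transvection.apply, LinearMap.smul_apply,
          ContinuousLinearMap.coe_coe, smul_eq_mul]
        module
      rw [hD]
      exact convex_ball 0 r hx hx_proj ht.1.le (by linarith [ht.2]) (by ring)
    · rw [mem_preimage, hℓD]
      exact ⟨by nlinarith [hℓx.1, ht.1], by nlinarith [hℓx.2, ht.1]⟩
  calc ENNReal.ofReal ((μ S).toReal * t) = ENNReal.ofReal |LinearMap.det D| * μ S := by
        rw [mul_comm, hdet, abs_of_pos ht.1, ENNReal.ofReal_mul ht.1.le,
          ENNReal.ofReal_toReal hSfin]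
    _ = μ (D '' S) := (Measure.addHaar_image_linearMap μ D S).symm
    _ ≤ μ (O ∩ ℓ ⁻¹' Ico (-t) 0) := measure_mono himage

variable {φ : E → ℝ} {φ' : E →L[ℝ] ℝ} {z : E}

lemma exists_straightening (hφ : HasStrictFDerivAt φ φ' z) (hφ' : φ' ≠ 0) :
    ∃ Φ : E → E, (∀ x, φ' (Φ x) = φ x - φ z) ∧ map Φ (𝓝 z) = 𝓝 0 ∧
      ∃ V ∈ 𝓝 z, ∀ s ⊆ V, μ (Φ '' s) ≤ 2 * μ s ∧ μ s ≤ 2 * μ (Φ '' s) := by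
  obtain ⟨e, he⟩ := exists_apply_eq_one_of_ne_zero hφ'
  let Φ : E → E := fun x => x - z + (φ x - φ z - φ' (x - z)) • e
  have hΦ : HasStrictFDerivAt Φ (ContinuousLinearMap.id ℝ E) z := by
    have hz := (hasStrictFDerivAt_id (𝕜 := ℝ) z).sub_const z
    exact (hz.add (((hφ.sub_const (φ z)).sub (φ'.hasStrictFDerivAt.comp z hz)).smul_const e)
      ).congr_fderiv (by ext; simp)
  have hΦz : Φ z = 0 := by simp [Φ]
  refine ⟨Φ, fun x => by simp [Φ, he], ?_, ?_⟩
  · rw [← hΦz]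
    exact HasStrictFDerivAt.map_nhds_eq_of_equiv (f' := ContinuousLinearEquiv.refl ℝ E) hΦ
  have hupper := addHaar_image_le_mul_of_det_lt μ (ContinuousLinearMap.id ℝ E) (m := 2)
    (by simp [ContinuousLinearMap.det])
  have hlower := mul_le_addHaar_image_of_lt_det μ (ContinuousLinearMap.id ℝ E) (m := 1 / 2)
    (by simp [ContinuousLinearMap.det])
  obtain ⟨δ, ⟨hupper, hlower⟩, hδ⟩ := ((hupper.and hlower).and self_mem_nhdsWithin).exists
  obtain ⟨V, hV, happrox⟩ := hΦ.approximates_deriv_on_nhds (c := δ) (.inr hδ)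
  refine ⟨V, hV, fun s hs => ⟨hupper s Φ (happrox.mono_set hs), ?_⟩⟩
  calc μ s = 2 * (((1 / 2 : ℝ≥0) : ℝ≥0∞) * μ s) := by
        rw [← mul_assoc, ← ENNReal.coe_ofNat, ← ENNReal.coe_mul]; norm_num
    _ ≤ 2 * μ (Φ '' s) := by gcongr; exact hlower s Φ (happrox.mono_set hs)

lemma measure_setOf_eq_zero_of_hasStrictFDerivAt {S : Set E}
    (hS : ∀ z ∈ S, φ z = 0 → ∃ φ' : E →L[ℝ] ℝ, HasStrictFDerivAt φ φ' z ∧ φ' ≠ 0) :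
    μ {x ∈ S | φ x = 0} = 0 := by
  refine measure_null_of_locally_null _ fun z hz => ?_
  obtain ⟨φ', hφ, hφ'⟩ := hS z hz.1 hz.2
  obtain ⟨Φ, hΦ, -, V, hV, hμ⟩ := exists_straightening μ hφ hφ'
  refine ⟨V ∩ {x ∈ S | φ x = 0}, inter_mem (mem_nhdsWithin_of_mem_nhds hV) self_mem_nhdsWithin, ?_⟩
  have hker : μ (Φ '' (V ∩ {x ∈ S | φ x = 0})) = 0 := by
    refine measure_mono_null ?_ (Measure.addHaar_submodule μ (LinearMap.ker φ'.toLinearMap) ?_)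
    · rintro _ ⟨x, ⟨-, -, hx⟩, rfl⟩
      simp [hΦ, hx, hz.2]
    · exact LinearMap.ker_eq_top.not.2 (ContinuousLinearMap.coe_injective.ne hφ')
  simpa [hker] using (hμ (V ∩ {x ∈ S | φ x = 0}) inter_subset_left).2

lemma exists_pos_mul_le_measure_inter_preimage_Ico (hφ : HasStrictFDerivAt φ φ' z) (hφ' : φ' ≠ 0)
    (hz : φ z = 0) {O : Set E} (hO : O ∈ 𝓝 z) :
    ∃ c : ℝ, 0 < c ∧ ∀ t ∈ Ioo (0 : ℝ) 1,
      ENNReal.ofReal (c * t) ≤ μ (O ∩ φ ⁻¹' Ico (-t) 0) := by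
  obtain ⟨Φ, hΦ, hΦ_map, V, hV, hμ⟩ := exists_straightening μ hφ hφ'
  have hO' : Φ '' (V ∩ O) ∈ 𝓝 0 := hΦ_map ▸ image_mem_map (inter_mem hV hO)
  obtain ⟨c, hc, hslab⟩ := exists_pos_mul_le_measure_inter_slab μ hφ' hO'
  refine ⟨c / 2, half_pos hc, fun t ht => ?_⟩
  have hsubset : Φ '' (V ∩ O) ∩ φ' ⁻¹' Ico (-t) 0 ⊆ Φ '' (V ∩ (O ∩ φ ⁻¹' Ico (-t) 0)) := by
    rintro _ ⟨⟨x, hx, rfl⟩, hx_slab⟩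
    rw [mem_preimage, hΦ, hz, sub_zero] at hx_slab
    exact ⟨x, ⟨hx.1, hx.2, hx_slab⟩, rfl⟩
  have hle : ENNReal.ofReal (c * t) ≤ 2 * μ (O ∩ φ ⁻¹' Ico (-t) 0) :=
    calc ENNReal.ofReal (c * t) ≤ μ (Φ '' (V ∩ (O ∩ φ ⁻¹' Ico (-t) 0))) :=
          (hslab t ht).trans (measure_mono hsubset)
      _ ≤ 2 * μ (V ∩ (O ∩ φ ⁻¹' Ico (-t) 0)) := (hμ _ inter_subset_left).1
      _ ≤ 2 * μ (O ∩ φ ⁻¹' Ico (-t) 0) := by gcongr 2 * μ ?_; exact inter_subset_right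
  rw [div_mul_eq_mul_div, ENNReal.ofReal_div_of_pos two_pos, ENNReal.ofReal_ofNat]
  exact ENNReal.div_le_of_le_mul' hle

lemma exists_pos_mul_le_measure_sign_gain {P : Type*} [NormedAddCommGroup P] [NormedSpace ℝ P]
    {f : P × E → ℝ} {f' : P × E →L[ℝ] ℝ} {ψ₀ v : P} (hf : HasStrictFDerivAt f f' (ψ₀, z))
    (hz : f (ψ₀, z) = 0) {e : E} (he : f' (0, e) ≠ 0) (hv : 0 < f' (v, 0)) {O : Set E}
    (hO : O ∈ 𝓝 z) :
    ∃ c : ℝ, 0 < c ∧ ∀ᶠ t in 𝓝[>] (0 : ℝ),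
      ENNReal.ofReal (c * t) ≤ μ (O ∩ {x | f (ψ₀, x) < 0 ∧ 0 ≤ f (ψ₀ + t • v, x)}) := by
  obtain ⟨U, hU, hgain⟩ := exists_nhds_abs_sub_sub_le hf (v, 0) (half_pos hv)
  obtain ⟨W, hW, V, hV, hWV⟩ := mem_nhds_prod_iff.1 hU
  set a := f' (v, 0) / 2 with ha_def
  have ha : 0 < a := half_pos hv
  have hslice : HasStrictFDerivAt (fun x => f (ψ₀, x)) (f' ∘L .inr ℝ P E) z :=
    hf.comp z ((hasStrictFDerivAt_const ψ₀ z).prodMk (hasStrictFDerivAt_id z))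
  obtain ⟨c, hc, hshell⟩ := exists_pos_mul_le_measure_inter_preimage_Ico μ hslice
    (DFunLike.ne_iff.2 ⟨e, by simpa using he⟩) hz (inter_mem hO hV)
  refine ⟨c * a, mul_pos hc ha, ?_⟩
  have hline : Tendsto (fun t : ℝ => ψ₀ + t • v) (𝓝[>] 0) (𝓝 ψ₀) := by
    have : Continuous fun t : ℝ => ψ₀ + t • v := by fun_prop
    simpa using (this.tendsto 0).mono_left nhdsWithin_le_nhds
  filter_upwards [hline hW, Ioo_mem_nhdsGT (inv_pos.2 ha)] with t htW ht
  have hat : a * t ∈ Ioo (0 : ℝ) 1 :=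
    ⟨mul_pos ha ht.1, by simpa [ha.ne'] using mul_lt_mul_of_pos_left ht.2 ha⟩
  rw [mul_assoc]
  refine (hshell _ hat).trans (measure_mono ?_)
  rintro x ⟨⟨hxO, hxV⟩, hx_lower, hx_neg⟩
  refine ⟨hxO, hx_neg, ?_⟩
  have hx := hgain (ψ₀, x) (hWV (mk_mem_prod (mem_of_mem_nhds hW) hxV)) t
    (by simpa using hWV (mk_mem_prod htW hxV))
  simp only [Prod.smul_mk, smul_zero, Prod.mk_add_mk, add_zero, abs_of_pos ht.1] at hx
  linarith [(abs_le.1 hx).1, show t * f' (v, 0) = 2 * (a * t) by rw [ha_def]; ring]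

end LevelSet

section IrreducibleGenerator

variable {ι : Type*} [Fintype ι] [DecidableEq ι]

lemma sum_apply_eq_sum_mul_sum_single (A : (ι → ℝ) →ₗ[ℝ] ι → ℝ) (u : ι → ℝ) (I : Finset ι) :
    ∑ i ∈ I, A u i = ∑ j, u j * ∑ i ∈ I, A (Pi.single j 1) i := by
  simp_rw [Finset.mul_sum]
  rw [Finset.sum_comm]
  refine Finset.sum_congr rfl fun i _ => ?_
  conv_lhs => rw [pi_eq_sum_univ' u]
  simp

/-- The forward generator of an irreducible finite Markov chain: `A (Pi.single j 1) i` is the rate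
at which mass flows from `j` to `i`, the total mass is conserved, and mass leaks out of every proper
nonempty set of states. -/
structure IsIrreducibleGenerator (A : (ι → ℝ) →ₗ[ℝ] ι → ℝ) : Prop where
  rate_nonneg : ∀ i j, i ≠ j → 0 ≤ A (Pi.single j 1) i
  sum_eq_zero : ∀ u, ∑ i, A u i = 0
  exists_rate_pos : ∀ I : Finset ι, I.Nonempty → Iᶜ.Nonempty →
    ∃ j ∈ I, ∃ i ∈ Iᶜ, 0 < A (Pi.single j 1) i

namespace IsIrreducibleGenerator

variable {A : (ι → ℝ) →ₗ[ℝ] ι → ℝ}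

lemma sum_rate_nonneg_of_notMem (hA : IsIrreducibleGenerator A) {I : Finset ι} {j : ι}
    (hj : j ∉ I) : 0 ≤ ∑ i ∈ I, A (Pi.single j 1) i :=
  Finset.sum_nonneg fun i hi => hA.rate_nonneg i j (ne_of_mem_of_not_mem hi hj)

lemma sum_compl_rate_nonpos_of_notMem (hA : IsIrreducibleGenerator A) {I : Finset ι} {j : ι}
    (hj : j ∉ I) : ∑ i ∈ Iᶜ, A (Pi.single j 1) i ≤ 0 := by
  have htotal := hA.sum_eq_zero (Pi.single j 1)
  rw [← Finset.sum_add_sum_compl I] at htotal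
  linarith [hA.sum_rate_nonneg_of_notMem hj]

lemma nonpos_of_apply_eq_zero (hA : IsIrreducibleGenerator A) {u : ι → ℝ} (hu : A u = 0) {k : ι}
    (hk : u k = 0) (l : ι) : u l ≤ 0 := by
  by_contra! hl
  let I : Finset ι := {j | 0 < u j}
  have hI (j : ι) : j ∈ I ↔ 0 < u j := by simp [I]
  obtain ⟨j, hj, i, hi, hrate⟩ := hA.exists_rate_pos I ⟨l, (hI l).2 hl⟩
    ⟨k, by simp [hI, hk]⟩
  have hflow (j' : ι) : 0 ≤ u j' * ∑ i ∈ Iᶜ, A (Pi.single j' 1) i := by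
    by_cases hj' : j' ∈ I
    · exact mul_nonneg ((hI j').1 hj').le (hA.sum_rate_nonneg_of_notMem (by simpa using hj'))
    · exact mul_nonneg_of_nonpos_of_nonpos (not_lt.1 fun h => hj' ((hI j').2 h))
        (hA.sum_compl_rate_nonpos_of_notMem hj')
  have hflow_pos : 0 < u j * ∑ i ∈ Iᶜ, A (Pi.single j 1) i :=
    mul_pos ((hI j).1 hj) (Finset.sum_pos' (fun i' hi' => hA.rate_nonneg i' j
      (ne_of_mem_of_not_mem hj (Finset.mem_compl.1 hi')).symm) ⟨i, hi, hrate⟩)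
  have hzero := sum_apply_eq_sum_mul_sum_single A u Iᶜ
  simp only [hu, Pi.zero_apply, Finset.sum_const_zero] at hzero
  exact hzero.not_lt (Finset.sum_pos' (fun j' _ => hflow j') ⟨j, Finset.mem_univ j, hflow_pos⟩)

lemma eq_zero_of_apply_eq_zero (hA : IsIrreducibleGenerator A) {u : ι → ℝ} (hu : A u = 0) {k : ι}
    (hk : u k = 0) : u = 0 := by
  ext l
  refine le_antisymm (hA.nonpos_of_apply_eq_zero hu hk l) ?_
  have := hA.nonpos_of_apply_eq_zero (u := -u) (k := k) (by simp [hu]) (by simp [hk]) l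
  simpa using this

-- `A` has a one-dimensional kernel and corank one; adding `u k • Pi.single k 1` makes it invertible
-- without changing it on `{u | u k = 0}`, and the new map sends `u` to a vector with sum `u k`.
lemma existsUnique_apply_eq (hA : IsIrreducibleGenerator A) {w : ι → ℝ} (hw : ∑ i, w i = 0)
    (k : ι) : ∃! u, A u = w ∧ u k = 0 := by
  let B : (ι → ℝ) →ₗ[ℝ] ι → ℝ := A + (LinearMap.proj k).smulRight (Pi.single k 1)
  have hB (u : ι → ℝ) : B u = A u + u k • Pi.single k 1 := rfl
  have hB_sum (u : ι → ℝ) : ∑ i, B u i = u k := by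
    simp [hB, Finset.sum_add_distrib, hA.sum_eq_zero, ← Finset.mul_sum]
  have hB_iff {u w' : ι → ℝ} (hw' : ∑ i, w' i = 0) : B u = w' ↔ A u = w' ∧ u k = 0 := by
    refine ⟨fun h => ?_, fun h => by simp [hB, h.1, h.2]⟩
    have hk : u k = 0 := by rw [← hB_sum u, h, hw']
    exact ⟨by simpa [hB, hk] using h, hk⟩
  have hB_inj : Function.Injective B := (injective_iff_map_eq_zero B).2 fun u hu =>
    have ⟨hAu, hk⟩ := (hB_iff (by simp)).1 hu
    hA.eq_zero_of_apply_eq_zero hAu hk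
  simp_rw [← hB_iff hw]
  exact Function.Bijective.existsUnique ⟨hB_inj, LinearMap.injective_iff_surjective.1 hB_inj⟩ w

end IsIrreducibleGenerator

end IrreducibleGenerator

section DirectionalGrowth

variable {P : Type*} [NormedAddCommGroup P] [NormedSpace ℝ P]

lemma le_apply_of_eventually_mul_le_sub {H : P → ℝ} {H' : P →L[ℝ] ℝ} {ψ v : P}
    (hH : HasFDerivAt H H' ψ) {c : ℝ}
    (hc : ∀ᶠ t in 𝓝[>] (0 : ℝ), c * t ≤ H (ψ + t • v) - H ψ) : c ≤ H' v := by
  have hslope := (hH.hasLineDerivAt v).tendsto_slope_zero_right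
  refine ge_of_tendsto hslope ?_
  filter_upwards [hc, self_mem_nhdsWithin] with t ht ht0
  rwa [smul_eq_mul, ← div_eq_inv_mul, le_div_iff₀ ht0]

lemma mul_le_setIntegral_sub_setIntegral {α : Type*} [MeasurableSpace α] {μ : Measure α}
    {ρ : α → ℝ} (hρi : Integrable ρ μ) (hρ0 : ∀ x, 0 ≤ ρ x) {A B D : Set α}
    (hA : MeasurableSet A) (hAB : A ⊆ B) (hD : D ⊆ B \ A) {ε c : ℝ}
    (hε : 0 < ε) (hρD : ∀ x ∈ D, ε ≤ ρ x) (hc : ENNReal.ofReal c ≤ μ D) :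
    ε * c ≤ ∫ x in B, ρ x ∂μ - ∫ x in A, ρ x ∂μ := by
  have hDsub : μ D ≤ μ.restrict (B \ A) {x | ε ≤ ρ x} :=
    (measure_mono (subset_inter hρD hD)).trans (Measure.le_restrict_apply _ _)
  have hfin : μ.restrict (B \ A) {x | ε ≤ ρ x} ≠ ∞ := (hρi.integrableOn.measure_ge_lt_top hε).ne
  calc ε * c ≤ ε * (μ.restrict (B \ A)).real {x | ε ≤ ρ x} := by
        gcongr
        exact (ENNReal.ofReal_le_iff_le_toReal hfin).1 (hc.trans hDsub)
    _ ≤ ∫ x in B \ A, ρ x ∂μ :=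
        mul_meas_ge_le_integral_of_nonneg (Eventually.of_forall hρ0) hρi.integrableOn ε
    _ = ∫ x in B, ρ x ∂μ - ∫ x in A, ρ x ∂μ := setIntegral_sdiff hA hρi.integrableOn hAB

end DirectionalGrowth

section GeneratingFunction

variable {Ω : Set (EuclideanSpace ℝ (Fin d))} {G : EuclideanSpace ℝ (Fin d) → Fin N → ℝ → ℝ}
  {ρ : EuclideanSpace ℝ (Fin d) → ℝ} {ψ : Fin N → ℝ} {i j : Fin N}
  {x : EuclideanSpace ℝ (Fin d)}

/-- A `C¹` generating function on `Ω` for finitely many targets satisfying the conditions (Mono) and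
(Twist). The target points only enter through their labels in `Fin N`. -/
structure IsGeneratingFunction (Ω : Set (EuclideanSpace ℝ (Fin d)))
    (G : EuclideanSpace ℝ (Fin d) → Fin N → ℝ → ℝ) : Prop where
  contDiffOn : ∀ i, ContDiffOn ℝ 1
    (fun q : EuclideanSpace ℝ (Fin d) × ℝ => G q.1 i q.2) (Ω ×ˢ univ)
  deriv_neg : ∀ x ∈ Ω, ∀ i v, deriv (G x i) v < 0
  twist : ∀ x ∈ Ω, Function.Injective fun q : Fin N × ℝ =>
    (G x q.1 q.2, gradient (fun x' => G x' q.1 q.2) x)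

/-- The amount by which target `i` beats target `j` at the point `x` for the parameter `ψ`: the
function of `(ψ, x)` whose zero set for fixed `ψ` is the interface `Γᵢⱼ(ψ)`. -/
def gap (G : EuclideanSpace ℝ (Fin d) → Fin N → ℝ → ℝ) (i j : Fin N)
    (p : (Fin N → ℝ) × EuclideanSpace ℝ (Fin d)) : ℝ :=
  G p.2 i (p.1 i) - G p.2 j (p.1 j)

/-- The points of `Ω` at which the values of three distinct targets coincide for the parameter `ψ`. -/
def triplePoints (Ω : Set (EuclideanSpace ℝ (Fin d)))
    (G : EuclideanSpace ℝ (Fin d) → Fin N → ℝ → ℝ) (ψ : Fin N → ℝ) :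
    Set (EuclideanSpace ℝ (Fin d)) :=
  {x | ∃ i j k, i ≠ j ∧ i ≠ k ∧ j ≠ k ∧ x ∈ Gam Ω G ψ i j ∩ Gam Ω G ψ i k}

lemma measure_triplePoints_eq_zero {μ : Measure (EuclideanSpace ℝ (Fin d))}
    (hgen : ∀ i j k, i ≠ j → i ≠ k → j ≠ k → μ (Gam Ω G ψ i j ∩ Gam Ω G ψ i k) = 0) :
    μ (triplePoints Ω G ψ) = 0 := by
  have hunion : triplePoints Ω G ψ = ⋃ i, ⋃ j, ⋃ k, ⋃ (_ : i ≠ j), ⋃ (_ : i ≠ k), ⋃ (_ : j ≠ k),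
      Gam Ω G ψ i j ∩ Gam Ω G ψ i k := by
    ext
    simp only [triplePoints, mem_ofPred_eq, mem_iUnion, exists_prop]
  simp only [hunion, measure_iUnion_null_iff]
  exact hgen

lemma Lag_eq_cell (i : Fin N) :
    Lag Ω G ψ i = cell Ω (fun j : {j // j ≠ i} => gap G i j) ψ := by
  ext x
  refine and_congr_right fun _ => ⟨fun h j => sub_nonneg.2 (h j), fun h j => ?_⟩
  rcases eq_or_ne j i with rfl | hj
  exacts [le_rfl, sub_nonneg.1 (h ⟨j, hj⟩)]

lemma subset_iUnion_Lag [Nonempty (Fin N)] : Ω ⊆ ⋃ i, Lag Ω G ψ i := fun x hx =>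
  have ⟨i, hi⟩ := Finite.exists_max fun i => G x i (ψ i)
  mem_iUnion.2 ⟨i, hx, hi⟩

lemma Lag_inter_Lag_subset_Gam (i j : Fin N) : Lag Ω G ψ i ∩ Lag Ω G ψ j ⊆ Gam Ω G ψ i j :=
  fun _ hx => ⟨hx.1.1, le_antisymm (hx.2.2 i) (hx.1.2 j)⟩

namespace IsGeneratingFunction

lemma contDiffAt (hG : IsGeneratingFunction Ω G) (hΩ : IsOpen Ω) (hx : x ∈ Ω) (i : Fin N)
    (v : ℝ) : ContDiffAt ℝ 1 (fun q : EuclideanSpace ℝ (Fin d) × ℝ => G q.1 i q.2) (x, v) :=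
  (hG.contDiffOn i).contDiffAt ((hΩ.prod isOpen_univ).mem_nhds ⟨hx, mem_univ v⟩)

lemma contDiffAt_gap (hG : IsGeneratingFunction Ω G) (hΩ : IsOpen Ω) (hx : x ∈ Ω)
    (i j : Fin N) : ContDiffAt ℝ 1 (gap G i j) (ψ, x) := by
  have hterm (i : Fin N) : ContDiffAt ℝ 1
      (fun p : (Fin N → ℝ) × EuclideanSpace ℝ (Fin d) => G p.2 i (p.1 i)) (ψ, x) :=
    (hG.contDiffAt hΩ hx i (ψ i)).comp (ψ, x)
      (f := fun p : (Fin N → ℝ) × EuclideanSpace ℝ (Fin d) => (p.2, p.1 i)) (by fun_prop)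
  exact (hterm i).sub (hterm j)

lemma strictAnti (hG : IsGeneratingFunction Ω G) (hx : x ∈ Ω) (i : Fin N) :
    StrictAnti (G x i) :=
  strictAnti_of_deriv_neg (hG.deriv_neg x hx i)

lemma continuousOn_apply (hG : IsGeneratingFunction Ω G) (i : Fin N) (v : ℝ) :
    ContinuousOn (fun x => G x i v) Ω :=
  (hG.contDiffOn i).continuousOn.comp (f := fun x => (x, v)) (by fun_prop) fun _ hx =>
    ⟨hx, mem_univ v⟩

lemma exists_fderiv_gap_ne_zero (hG : IsGeneratingFunction Ω G) (hΩ : IsOpen Ω) (hij : i ≠ j)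
    (hx : x ∈ Ω) (hzero : gap G i j (ψ, x) = 0) :
    ∃ e, fderiv ℝ (gap G i j) (ψ, x) (0, e) ≠ 0 := by
  by_contra! hall
  have hdiff (l : Fin N) : DifferentiableAt ℝ (fun x' => G x' l (ψ l)) x :=
    ((hG.contDiffAt hΩ hx l (ψ l)).differentiableAt one_ne_zero).comp
      (f := fun x' => (x', ψ l)) x (by fun_prop)
  have hslice : fderiv ℝ (fun x' => G x' i (ψ i) - G x' j (ψ j)) x = 0 := by
    have hcomp := ((hG.contDiffAt_gap hΩ hx i j).differentiableAt one_ne_zero).hasFDerivAt.comp x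
      (hasFDerivAt_prodMk_right ψ x)
    refine (HasFDerivAt.fderiv hcomp).trans (ContinuousLinearMap.ext fun e => ?_)
    simpa using hall e
  rw [fderiv_fun_sub (hdiff i) (hdiff j), sub_eq_zero] at hslice
  have hgradient : gradient (fun x' => G x' i (ψ i)) x = gradient (fun x' => G x' j (ψ j)) x := by
    rw [gradient, gradient, hslice]
  exact hij (congrArg Prod.fst (@hG.twist x hx (i, ψ i) (j, ψ j)
    (Prod.ext (sub_eq_zero.1 hzero) hgradient)))

lemma fderiv_gap_single_pos (hG : IsGeneratingFunction Ω G) (hΩ : IsOpen Ω) (hij : i ≠ j)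
    (hx : x ∈ Ω) : 0 < fderiv ℝ (gap G i j) (ψ, x) (Pi.single j 1, 0) := by
  have hline := ((hG.contDiffAt_gap hΩ hx i j).differentiableAt one_ne_zero
    (x := (ψ, x))).hasFDerivAt.hasLineDerivAt (Pi.single j 1, 0)
  have hGj : HasDerivAt (fun t : ℝ => G x i (ψ i) - G x j (ψ j + t)) (-deriv (G x j) (ψ j)) 0 := by
    have hdiff : DifferentiableAt ℝ (G x j) (ψ j) :=
      ((hG.contDiffAt hΩ hx j (ψ j)).differentiableAt one_ne_zero).comp
        (f := fun v => (x, v)) (ψ j) (by fun_prop)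
    have hderiv : HasDerivAt (G x j) (deriv (G x j) (ψ j)) (ψ j + 0) := by
      simpa using hdiff.hasDerivAt
    exact (hderiv.comp_const_add (ψ j) 0).const_sub _
  have heq : (fun t : ℝ => gap G i j ((ψ, x) + t • (Pi.single j 1, 0))) =
      fun t => G x i (ψ i) - G x j (ψ j + t) := by
    ext t
    simp [gap, Pi.single_eq_of_ne hij]
  rw [HasLineDerivAt, heq] at hline
  rw [hline.unique hGj]
  exact neg_pos.2 (hG.deriv_neg x hx j (ψ j))

lemma measurableSet_Lag (hG : IsGeneratingFunction Ω G) (hΩ : IsOpen Ω) (ψ : Fin N → ℝ)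
    (i : Fin N) : MeasurableSet (Lag Ω G ψ i) := by
  have hmeas (l : Fin N) : Measurable fun x : Ω => G x l (ψ l) :=
    (hG.continuousOn_apply l (ψ l)).domRestrict.measurable
  have hset : MeasurableSet {x : Ω | ∀ j, G x j (ψ j) ≤ G x i (ψ i)} := by
    simp only [ofPred_forall]
    exact MeasurableSet.iInter fun j => measurableSet_le (hmeas j) (hmeas i)
  convert hΩ.measurableSet.subtype_image hset
  ext x
  simp [Lag, and_comm]

lemma measure_Gam (hG : IsGeneratingFunction Ω G) (hΩ : IsOpen Ω) (hij : i ≠ j) :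
    volume (Gam Ω G ψ i j) = 0 := by
  have hGam : Gam Ω G ψ i j = {x ∈ Ω | gap G i j (ψ, x) = 0} := by
    ext x
    simp [Gam, gap, sub_eq_zero]
  rw [hGam]
  refine measure_setOf_eq_zero_of_hasStrictFDerivAt volume fun x hx hzero => ?_
  obtain ⟨e, he⟩ := hG.exists_fderiv_gap_ne_zero hΩ hij hx hzero
  exact ⟨_, ((hG.contDiffAt_gap hΩ hx i j).hasStrictFDerivAt one_ne_zero).comp x
    ((hasStrictFDerivAt_const ψ x).prodMk (hasStrictFDerivAt_id x)),
    DFunLike.ne_iff.2 ⟨e, by simpa using he⟩⟩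

lemma Hfun_eq_setIntegral (hG : IsGeneratingFunction Ω G) (hΩ : IsOpen Ω) (hρi : Integrable ρ)
    (hρ0 : ∀ x, 0 ≤ ρ x) (ψ : Fin N → ℝ) (i : Fin N) :
    Hfun Ω G ρ ψ i = ∫ x in Lag Ω G ψ i, ρ x := by
  rw [Hfun, withDensity_apply _ (hG.measurableSet_Lag hΩ ψ i), integral_eq_lintegral_of_nonneg_ae
    (Eventually.of_forall hρ0) hρi.aestronglyMeasurable.restrict]

lemma sum_Hfun [Nonempty (Fin N)] (hG : IsGeneratingFunction Ω G) (hΩ : IsOpen Ω)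
    (hρi : Integrable ρ) (hρ0 : ∀ x, 0 ≤ ρ x) (hρΩ : tsupport ρ ⊆ Ω) (ψ : Fin N → ℝ) :
    ∑ i, Hfun Ω G ρ ψ i = ∫ x, ρ x := by
  simp_rw [hG.Hfun_eq_setIntegral hΩ hρi hρ0]
  refine ((hasSum_fintype _).unique <| hasSum_integral_iUnion_ae
    (fun i => (hG.measurableSet_Lag hΩ ψ i).nullMeasurableSet)
    (fun i j hij => measure_mono_null (Lag_inter_Lag_subset_Gam i j) (hG.measure_Gam hΩ hij))
    hρi.integrableOn).trans ?_
  exact setIntegral_eq_integral_of_forall_compl_eq_zero fun x hx =>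
    image_eq_zero_of_notMem_tsupport fun hxρ => hx (subset_iUnion_Lag (hρΩ hxρ))

lemma differentiableAt_Hfun (hG : IsGeneratingFunction Ω G) (hΩ : IsOpen Ω) (hρc : Continuous ρ)
    (hρ0 : ∀ x, 0 ≤ ρ x) (hρs : HasCompactSupport ρ) (hρΩ : tsupport ρ ⊆ Ω)
    (hgen : μH[(d : ℝ) - 1] (triplePoints Ω G ψ) = 0) :
    DifferentiableAt ℝ (Hfun Ω G ρ) ψ := by
  refine differentiableAt_pi.2 fun i => ?_
  have hρi := hρc.integrable_of_hasCompactSupport hρs (μ := volume)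
  simp only [hG.Hfun_eq_setIntegral hΩ hρi hρ0, Lag_eq_cell]
  refine differentiableAt_setIntegral_cell (f := fun j : {j // j ≠ i} => gap G i j) hΩ
    (fun ψ' => Lag_eq_cell (ψ := ψ') i ▸ hG.measurableSet_Lag hΩ ψ' i)
    (fun j x hx => hG.contDiffAt_gap hΩ hx i j)
    (fun j x hx => hG.exists_fderiv_gap_ne_zero hΩ j.2.symm hx) ?_ hρc hρs hρΩ
  rw [finrank_euclideanSpace_fin]
  refine measure_mono_null ?_ hgen
  rintro x ⟨hx, j, k, hjk, hj, hk⟩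
  exact ⟨i, j, k, j.2.symm, k.2.symm, Subtype.coe_injective.ne hjk,
    ⟨hx, sub_eq_zero.1 hj⟩, hx, sub_eq_zero.1 hk⟩

lemma Lag_subset_Lag_add_single (hG : IsGeneratingFunction Ω G) (hij : i ≠ j) {t : ℝ}
    (ht : 0 ≤ t) : Lag Ω G ψ i ⊆ Lag Ω G (ψ + t • Pi.single j 1) i := by
  rintro x ⟨hx, hmax⟩
  refine ⟨hx, fun k => ?_⟩
  have hi : (ψ + t • Pi.single j 1 : Fin N → ℝ) i = ψ i := by simp [hij]
  have hk : ψ k ≤ (ψ + t • Pi.single j 1 : Fin N → ℝ) k := by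
    have hsingle : (0 : Fin N → ℝ) ≤ Pi.single j 1 := Pi.single_nonneg.2 zero_le_one
    exact le_add_of_nonneg_right (mul_nonneg ht (hsingle k))
  rw [hi]
  exact ((hG.strictAnti hx k).antitone hk).trans (hmax k)

lemma fderiv_Hfun_nonneg (hG : IsGeneratingFunction Ω G) (hΩ : IsOpen Ω) (hρi : Integrable ρ)
    (hρ0 : ∀ x, 0 ≤ ρ x) (hH : DifferentiableAt ℝ (Hfun Ω G ρ) ψ) (hij : i ≠ j) :
    0 ≤ fderiv ℝ (Hfun Ω G ρ) ψ (Pi.single j 1) i := by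
  refine le_apply_of_eventually_mul_le_sub (hasFDerivAt_pi'.1 hH.hasFDerivAt i) ?_
  filter_upwards [self_mem_nhdsWithin] with t ht
  rw [zero_mul, sub_nonneg, hG.Hfun_eq_setIntegral hΩ hρi hρ0, hG.Hfun_eq_setIntegral hΩ hρi hρ0]
  exact setIntegral_mono_set hρi.integrableOn (Eventually.of_forall hρ0)
    (LE.le.eventuallyLE (hG.Lag_subset_Lag_add_single hij ht.le))

lemma sum_fderiv_Hfun [Nonempty (Fin N)] (hG : IsGeneratingFunction Ω G) (hΩ : IsOpen Ω)
    (hρi : Integrable ρ) (hρ0 : ∀ x, 0 ≤ ρ x) (hρΩ : tsupport ρ ⊆ Ω)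
    (hH : DifferentiableAt ℝ (Hfun Ω G ρ) ψ) (u : Fin N → ℝ) :
    ∑ i, fderiv ℝ (Hfun Ω G ρ) ψ u i = 0 := by
  have hsum : HasFDerivAt (fun ψ' => ∑ i, Hfun Ω G ρ ψ' i)
      (∑ i, (ContinuousLinearMap.proj i).comp (fderiv ℝ (Hfun Ω G ρ) ψ)) ψ :=
    HasFDerivAt.fun_sum fun i _ => hasFDerivAt_pi'.1 hH.hasFDerivAt i
  simp_rw [hG.sum_Hfun hΩ hρi hρ0 hρΩ] at hsum
  simpa using congrArg (fun L => L u) (hsum.unique (hasFDerivAt_const _ ψ))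

lemma fderiv_Hfun_pos (hG : IsGeneratingFunction Ω G) (hΩ : IsOpen Ω) (hρc : Continuous ρ)
    (hρi : Integrable ρ) (hρ0 : ∀ x, 0 ≤ ρ x) (hH : DifferentiableAt ℝ (Hfun Ω G ρ) ψ)
    (hij : i ≠ j) (hx : x ∈ Ω) (hρx : 0 < ρ x) (hzero : gap G i j (ψ, x) = 0)
    (hpos : ∀ k, k ≠ i → k ≠ j → 0 < gap G i k (ψ, x)) :
    0 < fderiv ℝ (Hfun Ω G ρ) ψ (Pi.single j 1) i := by
  have hiff : ∀ᶠ p in 𝓝 (ψ, x), p.2 ∈ Lag Ω G p.1 i ↔ 0 ≤ gap G i j p := by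
    simp only [Lag_eq_cell]
    exact eventually_mem_cell_iff_of_forall_ne_pos (f := fun k : {k // k ≠ i} => gap G i k)
      hΩ hx ⟨j, hij.symm⟩
      (fun k => (hG.contDiffAt_gap hΩ hx i k).continuousAt)
      fun k hk => hpos k k.2 fun h => hk (Subtype.ext h)
  obtain ⟨W, hW, V, hV, hWV⟩ := mem_nhds_prod_iff.1 hiff
  have hρ_near : {x' | ρ x / 2 < ρ x'} ∈ 𝓝 x :=
    hρc.continuousAt.eventually (lt_mem_nhds (half_lt_self hρx))
  obtain ⟨e, he⟩ := hG.exists_fderiv_gap_ne_zero hΩ hij hx hzero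
  obtain ⟨c, hc, hgain⟩ := exists_pos_mul_le_measure_sign_gain volume
    ((hG.contDiffAt_gap hΩ hx i j).hasStrictFDerivAt one_ne_zero) hzero he
    (hG.fderiv_gap_single_pos hΩ hij hx) (inter_mem hV hρ_near)
  refine (mul_pos (half_pos hρx) hc).trans_le
    (le_apply_of_eventually_mul_le_sub (hasFDerivAt_pi'.1 hH.hasFDerivAt i) ?_)
  have hline : Tendsto (fun t : ℝ => ψ + t • (Pi.single j 1 : Fin N → ℝ)) (𝓝[>] 0) (𝓝 ψ) := by
    have : Continuous fun t : ℝ => ψ + t • (Pi.single j 1 : Fin N → ℝ) := by fun_prop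
    simpa using (this.tendsto 0).mono_left nhdsWithin_le_nhds
  filter_upwards [hgain, hline hW, self_mem_nhdsWithin] with t hgain_t htW ht
  rw [hG.Hfun_eq_setIntegral hΩ hρi hρ0, hG.Hfun_eq_setIntegral hΩ hρi hρ0, mul_assoc]
  refine mul_le_setIntegral_sub_setIntegral hρi hρ0 (hG.measurableSet_Lag hΩ ψ i)
    (hG.Lag_subset_Lag_add_single hij ht.le) ?_ (half_pos hρx) (fun x' hx' => hx'.1.2.le) hgain_t
  rintro x' ⟨⟨hx'V, -⟩, hx'_neg, hx'_nonneg⟩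
  exact ⟨(hWV (mk_mem_prod htW hx'V)).2 hx'_nonneg, fun hx'_mem =>
    ((hWV (mk_mem_prod (mem_of_mem_nhds hW) hx'V)).1 hx'_mem).not_gt hx'_neg⟩

lemma exists_mem_Lag_notMem_triplePoints (hG : IsGeneratingFunction Ω G) (hΩ : IsOpen Ω)
    (hρi : Integrable ρ) (hρ0 : ∀ x, 0 ≤ ρ x) (hi : 0 < Hfun Ω G ρ ψ i) :
    ∃ x ∈ {x | 0 < ρ x} \ triplePoints Ω G ψ, x ∈ Lag Ω G ψ i := by
  by_contra! hnone
  have hnull : volume (triplePoints Ω G ψ) = 0 := measure_triplePoints_eq_zero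
    fun i j k hij _ _ => measure_mono_null inter_subset_left (hG.measure_Gam hΩ hij)
  refine hi.ne' ?_
  rw [hG.Hfun_eq_setIntegral hΩ hρi hρ0]
  refine setIntegral_eq_zero_of_ae_eq_zero ?_
  filter_upwards [measure_eq_zero_iff_ae_notMem.1 hnull] with x hxT hxi
  exact le_antisymm (not_lt.1 fun hρx => hnone x ⟨hρx, hxT⟩ hxi) (hρ0 x)

lemma exists_mem_Lag_inter_Lag (hG : IsGeneratingFunction Ω G) {S : Set (EuclideanSpace ℝ (Fin d))}
    (hS : IsPreconnected S) (hSΩ : S ⊆ Ω) (hmeet : ∀ i, ∃ x ∈ S, x ∈ Lag Ω G ψ i)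
    {I : Finset (Fin N)} (hI : I.Nonempty) (hIc : Iᶜ.Nonempty) :
    ∃ x ∈ S, ∃ j ∈ I, ∃ i ∈ Iᶜ, x ∈ Lag Ω G ψ j ∩ Lag Ω G ψ i := by
  let best (J : Finset (Fin N)) (hJ : J.Nonempty) (x : EuclideanSpace ℝ (Fin d)) : ℝ :=
    J.sup' hJ fun l => G x l (ψ l)
  have hcont (J : Finset (Fin N)) (hJ : J.Nonempty) : ContinuousOn (best J hJ) S :=
    ContinuousOn.finset_sup'_apply hJ fun l _ => (hG.continuousOn_apply l (ψ l)).mono hSΩ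
  have hle {J : Finset (Fin N)} (hJ : J.Nonempty) {x : EuclideanSpace ℝ (Fin d)} {l : Fin N}
      (hx : x ∈ Lag Ω G ψ l) : best J hJ x ≤ G x l (ψ l) :=
    Finset.sup'_le _ _ fun l' _ => hx.2 l'
  have hge {J : Finset (Fin N)} (hJ : J.Nonempty) (x : EuclideanSpace ℝ (Fin d)) {l : Fin N}
      (hl : l ∈ J) : G x l (ψ l) ≤ best J hJ x := Finset.le_sup' (fun l => G x l (ψ l)) hl
  obtain ⟨j₀, hj₀⟩ := hI
  obtain ⟨i₀, hi₀⟩ := hIc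
  obtain ⟨a, haS, ha⟩ := hmeet j₀
  obtain ⟨b, hbS, hb⟩ := hmeet i₀
  obtain ⟨x, hxS, hx⟩ := hS.intermediate_value₂ hbS haS (hcont I ⟨j₀, hj₀⟩) (hcont Iᶜ ⟨i₀, hi₀⟩)
    ((hle _ hb).trans (hge _ b hi₀)) ((hle _ ha).trans (hge _ a hj₀))
  obtain ⟨j, hj, hj_best⟩ := Finset.exists_mem_eq_sup' ⟨j₀, hj₀⟩ fun l => G x l (ψ l)
  obtain ⟨i, hi, hi_best⟩ := Finset.exists_mem_eq_sup' ⟨i₀, hi₀⟩ fun l => G x l (ψ l)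
  have hmax (l : Fin N) : G x l (ψ l) ≤ best I ⟨j₀, hj₀⟩ x := by
    by_cases hl : l ∈ I
    · exact hge _ x hl
    · exact hx ▸ hge _ x (Finset.mem_compl.2 hl)
  exact ⟨x, hxS, j, hj, i, hi, ⟨hSΩ hxS, fun l => (hmax l).trans_eq hj_best⟩,
    hSΩ hxS, fun l => (hmax l).trans_eq (hx.trans hi_best)⟩

lemma exists_fderiv_Hfun_pos (hG : IsGeneratingFunction Ω G) (hΩ : IsOpen Ω) (hρc : Continuous ρ)
    (hρi : Integrable ρ) (hρ0 : ∀ x, 0 ≤ ρ x) (hρΩ : tsupport ρ ⊆ Ω)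
    (hconn : IsPreconnected {x | 0 < ρ x}) (hgen : μH[(d : ℝ) - 1] (triplePoints Ω G ψ) = 0)
    (hψ : ∀ i, 0 < Hfun Ω G ρ ψ i) (hH : DifferentiableAt ℝ (Hfun Ω G ρ) ψ)
    {I : Finset (Fin N)} (hI : I.Nonempty) (hIc : Iᶜ.Nonempty) :
    ∃ j ∈ I, ∃ i ∈ Iᶜ, 0 < fderiv ℝ (Hfun Ω G ρ) ψ (Pi.single j 1) i := by
  have hS : IsPreconnected ({x | 0 < ρ x} \ triplePoints Ω G ψ) :=
    isPreconnected_sdiff_of_hausdorffMeasure_eq_zero hconn (isOpen_lt continuous_const hρc)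
      (by rwa [finrank_euclideanSpace_fin])
  have hSΩ : {x | 0 < ρ x} \ triplePoints Ω G ψ ⊆ Ω := fun x hx =>
    hρΩ (subset_tsupport ρ hx.1.ne')
  obtain ⟨x, ⟨hρx, hxT⟩, j, hj, i, hi, hxj, hxi⟩ := hG.exists_mem_Lag_inter_Lag hS hSΩ
    (fun i => hG.exists_mem_Lag_notMem_triplePoints hΩ hρi hρ0 (hψ i)) hI hIc
  have hij : i ≠ j := (ne_of_mem_of_not_mem hj (Finset.mem_compl.1 hi)).symm
  have hxij : x ∈ Gam Ω G ψ i j := Lag_inter_Lag_subset_Gam i j ⟨hxi, hxj⟩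
  refine ⟨j, hj, i, hi, hG.fderiv_Hfun_pos hΩ hρc hρi hρ0 hH hij hxi.1 hρx
    (sub_eq_zero.2 hxij.2) fun k hki hkj => sub_pos.2 ((hxi.2 k).lt_of_ne fun hk => ?_)⟩
  exact hxT ⟨i, j, k, hij, hki.symm, hkj.symm, hxij, hxi.1, hk.symm⟩

theorem isIrreducibleGenerator_fderiv_Hfun [Nonempty (Fin N)] (hG : IsGeneratingFunction Ω G)
    (hΩ : IsOpen Ω) (hρc : Continuous ρ) (hρ0 : ∀ x, 0 ≤ ρ x) (hρs : HasCompactSupport ρ)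
    (hρΩ : tsupport ρ ⊆ Ω) (hconn : IsPreconnected {x | 0 < ρ x})
    (hgen : μH[(d : ℝ) - 1] (triplePoints Ω G ψ) = 0) (hψ : ∀ i, 0 < Hfun Ω G ρ ψ i) :
    IsIrreducibleGenerator (fderiv ℝ (Hfun Ω G ρ) ψ).toLinearMap := by
  have hρi : Integrable ρ := hρc.integrable_of_hasCompactSupport hρs
  have hH := hG.differentiableAt_Hfun hΩ hρc hρ0 hρs hρΩ hgen
  exact
    { rate_nonneg := fun _ _ hij => hG.fderiv_Hfun_nonneg hΩ hρi hρ0 hH hij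
      sum_eq_zero := hG.sum_fderiv_Hfun hΩ hρi hρ0 hρΩ hH
      exists_rate_pos := fun _ =>
        hG.exists_fderiv_Hfun_pos hΩ hρc hρi hρ0 hρΩ hconn hgen hψ hH }

end IsGeneratingFunction

theorem newton_system_unique_solution_general (hΩ : IsOpen Ω) (hG : IsGeneratingFunction Ω G)
    (hρc : Continuous ρ) (hρ0 : ∀ x, 0 ≤ ρ x) (hρs : HasCompactSupport ρ) (hρΩ : tsupport ρ ⊆ Ω)
    (hconn : IsPreconnected {x | 0 < ρ x})
    (hgen : ∀ i j k, i ≠ j → i ≠ k → j ≠ k →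
      μH[(d : ℝ) - 1] (Gam Ω G ψ i j ∩ Gam Ω G ψ i k) = 0)
    (hψ : ∀ i, 0 < Hfun Ω G ρ ψ i) {ν : Fin N → ℝ} (hν : ∑ i, ν i = ∫ x, ρ x) (k : Fin N) :
    ∃! u : Fin N → ℝ, fderiv ℝ (Hfun Ω G ρ) ψ u = Hfun Ω G ρ ψ - ν ∧ u k = 0 := by
  have : Nonempty (Fin N) := ⟨k⟩
  refine (hG.isIrreducibleGenerator_fderiv_Hfun hΩ hρc hρ0 hρs hρΩ hconn
    (measure_triplePoints_eq_zero hgen) hψ).existsUnique_apply_eq ?_ k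
  simp [Finset.sum_sub_distrib, hν,
    hG.sum_Hfun hΩ (hρc.integrable_of_hasCompactSupport hρs) hρ0 hρΩ ψ]

end GeneratingFunction

/-- Proposition 3.8: the Newton system `DH(ψ)u = H(ψ) − ν`, `u₁ = 0` has a unique
solution. -/
theorem newton_system_unique_solution
    (hd : 1 ≤ d) (hN : 1 ≤ N)
    {Ω : Set (EuclideanSpace ℝ (Fin d))} (hΩo : IsOpen Ω) (hΩb : Bornology.IsBounded Ω)
    (y : Fin N → EuclideanSpace ℝ (Fin d)) (hy : Function.Injective y)
    (G : EuclideanSpace ℝ (Fin d) → Fin N → ℝ → ℝ)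
    (Gx : EuclideanSpace ℝ (Fin d) → Fin N → ℝ → EuclideanSpace ℝ (Fin d))
    (Gv : EuclideanSpace ℝ (Fin d) → Fin N → ℝ → ℝ)
    (hGx : ∀ x ∈ Ω, ∀ (i : Fin N) (v : ℝ), HasGradientAt (fun x' => G x' i v) (Gx x i v) x)
    (hGv : ∀ x ∈ Ω, ∀ (i : Fin N) (v : ℝ), HasDerivAt (fun v' => G x i v') (Gv x i v) v)
    (hGxc : ∀ i : Fin N, ContinuousOn (fun q : EuclideanSpace ℝ (Fin d) × ℝ => Gx q.1 i q.2) (Ω ×ˢ Set.univ))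
    (hGvc : ∀ i : Fin N, ContinuousOn (fun q : EuclideanSpace ℝ (Fin d) × ℝ => Gv q.1 i q.2) (Ω ×ˢ Set.univ))
    (hG2 : ∀ i : Fin N, ContDiffOn ℝ 2 (fun q : EuclideanSpace ℝ (Fin d) × ℝ => G q.1 i q.2) (Ω ×ˢ Set.univ))
    (hReg : ∀ α β : ℝ, α < β → ∃ C : ℝ, ∀ x ∈ Ω, ∀ i : Fin N, ∀ v ∈ Set.Icc α β, ‖Gx x i v‖ ≤ C)
    (hMono : ∀ x ∈ Ω, ∀ (i : Fin N) (v : ℝ), Gv x i v < 0)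
    (hTwist : ∀ x ∈ Ω, Function.Injective fun q : Fin N × ℝ => (G x q.1 q.2, Gx x q.1 q.2))
    {X : Set (EuclideanSpace ℝ (Fin d))} (hXc : IsCompact X) (hXΩ : X ⊆ Ω)
    (ρ : EuclideanSpace ℝ (Fin d) → ℝ) (hρc : Continuous ρ) (hρ0 : ∀ x, 0 ≤ ρ x)
    (hρsupp : tsupport ρ ⊆ X) (hρ1 : (∫ x, ρ x) = 1)
    (hGenΩ : ∀ (ψ : Fin N → ℝ) (i j k : Fin N), i ≠ j → i ≠ k → j ≠ k →
      μH[(d : ℝ) - 1] (Gam Ω G ψ i j ∩ Gam Ω G ψ i k) = 0)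
    (hGenX : ∀ (ψ : Fin N → ℝ) (i j : Fin N), i ≠ j →
      μH[(d : ℝ) - 1] (Gam Ω G ψ i j ∩ frontier X) = 0)
    (hpc : IsPathConnected (interior X ∩ {x | 0 < ρ x}))
    (ν : Fin N → ℝ) (hν : (∑ i, ν i) = 1)
    (ψ : Fin N → ℝ) (hψ : ∀ i : Fin N, 0 < Hfun Ω G ρ ψ i) :
    ∃! u : Fin N → ℝ,
      fderiv ℝ (Hfun Ω G ρ) ψ u = Hfun Ω G ρ ψ - ν ∧ u ⟨0, hN⟩ = 0 := by
  have hG : IsGeneratingFunction Ω G :=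
    { contDiffOn := fun i => (hG2 i).of_le one_le_two
      deriv_neg := fun x hx i v => (hGv x hx i v).deriv ▸ hMono x hx i v
      twist := fun x hx => by simpa only [(hGx x hx _ _).gradient] using hTwist x hx }
  have hρX : interior X ∩ {x | 0 < ρ x} = {x | 0 < ρ x} :=
    inter_eq_right.2 <| interior_maximal (fun x hx => hρsupp (subset_tsupport ρ hx.ne'))
      (isOpen_lt continuous_const hρc)
  exact newton_system_unique_solution_general hΩo hG hρc hρ0
    (hXc.of_isClosed_subset (isClosed_tsupport ρ) hρsupp) (hρsupp.trans hXΩ)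
    (hρX ▸ hpc.isConnected.isPreconnected) (hGenΩ ψ) hψ (hν.trans hρ1.symm) ⟨0, hN⟩
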